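/- For every s | N, the rescaled partial dual I_ij^{*,s} = (I_ij^{#} ∩ I_ij[1/s], s·n) lies in the same genus of quaternary quadratic lattices as the I_ij, and hence is isometric to some lattice I_{i'j'}. -/

import Mathlib

open scoped Quaternion BigOperators Matrix

noncomputable section

namespace Rep

/-! ### Integral binary quadratic forms, class numbers, fundamental discriminants -/

/-- `T` is the matrix of an integral binary quadratic form, i.e. an integral symmetric
matrix `T = (2a, b; b, 2c)` (even diagonal). -/
def IsBinaryMatrix (T : Matrix (Fin 2) (Fin 2) ℤ) : Prop :=
  T 0 1 = T 1 0 ∧ (2 ∣ T 0 0) ∧ (2 ∣ T 1 1)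

/-- The signed discriminant `b² - 4ac` of `T = (2a, b; b, 2c)`. -/
def disc (T : Matrix (Fin 2) (Fin 2) ℤ) : ℤ := T 0 1 ^ 2 - T 0 0 * T 1 1

/-- `T = (2a, b; b, 2c)` is positive definite. -/
def PosDefBinary (T : Matrix (Fin 2) (Fin 2) ℤ) : Prop := 0 < T 0 0 ∧ disc T < 0

/-- `ε(T)`: the number of proper automorphs `U ∈ SL₂(ℤ)`, `UᵀTU = T`, of `T`. -/
def autCount (T : Matrix (Fin 2) (Fin 2) ℤ) : ℕ :=
  Set.ncard {U : Matrix.SpecialLinearGroup (Fin 2) ℤ |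
    (U : Matrix (Fin 2) (Fin 2) ℤ)ᵀ * T * U = T}

/-- proper (`SL₂(ℤ)`-) equivalence of binary forms. -/
def SLEquiv (T T' : Matrix (Fin 2) (Fin 2) ℤ) : Prop :=
  ∃ U : Matrix.SpecialLinearGroup (Fin 2) ℤ, (U : Matrix (Fin 2) (Fin 2) ℤ)ᵀ * T * U = T'

/-- Gauss-reduced positive definite binary form `(2a, b; b, 2c)`:
`-a < b ≤ a ≤ c`, and `b ≥ 0` if `a = c`. -/
def IsReduced (T : Matrix (Fin 2) (Fin 2) ℤ) : Prop :=
  -(T 0 0) < 2 * T 0 1 ∧ 2 * T 0 1 ≤ T 0 0 ∧ T 0 0 ≤ T 1 1 ∧ (T 0 0 = T 1 1 → 0 ≤ T 0 1)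

/-- A canonical set of representatives for the `SL₂(ℤ)`-equivalence classes of positive
definite integral binary quadratic forms of discriminant `-d`: the reduced forms. -/
def reducedForms (d : ℤ) : Set (Matrix (Fin 2) (Fin 2) ℤ) :=
  {T | IsBinaryMatrix T ∧ PosDefBinary T ∧ disc T = -d ∧ IsReduced T}

/-- The class number `h(-d)`: the number of `SL₂(ℤ)`-classes of primitive positive definite
integral binary quadratic forms of discriminant `-d`; for a fundamental discriminant `-d`
this is the class number of `ℚ(√-d)`. -/
def classNumber (d : ℤ) : ℕ :=
  Set.ncard {T | T ∈ reducedForms d ∧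
    Int.gcd (Int.gcd (T 0 0 / 2) (T 0 1)) (T 1 1 / 2) = 1}

/-- `σ₀(n)`, the number of divisors of `n`. -/
def sigma0 (n : ℕ) : ℕ := n.divisors.card

/-- `D` is a fundamental discriminant (the discriminant of the ring of integers of a
quadratic field). -/
def IsFundamentalDiscriminant (D : ℤ) : Prop :=
  D ≠ 1 ∧ ((D % 4 = 1 ∧ Squarefree D) ∨
    (D % 4 = 0 ∧ Squarefree (D / 4) ∧ (D / 4 % 4 = 2 ∨ D / 4 % 4 = 3)))

/-! ### Quadratic lattices via Gram matrices: representation numbers, genus, spinor genus -/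

/-- The number of representations of the binary form with (bilinear) Gram matrix `T` by the
quadratic lattice with (bilinear) Gram matrix `A`. -/
def rMat {m : ℕ} (A : Matrix (Fin m) (Fin m) ℤ) (T : Matrix (Fin 2) (Fin 2) ℤ) : ℕ :=
  Set.ncard {X : Matrix (Fin m) (Fin 2) ℤ | Xᵀ * A * X = T}

/-- The number of representations of the integer `t` by the quadratic form `q(x) = (xᵀAx)/2`
with bilinear Gram matrix `A`. -/
def rQuad {m : ℕ} (A : Matrix (Fin m) (Fin m) ℤ) (t : ℤ) : ℕ :=
  Set.ncard {x : Fin m → ℤ | x ⬝ᵥ A.mulVec x = 2 * t}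

/-- The order of the automorphism group of the lattice with Gram matrix `A`. -/
def autMat {m : ℕ} (A : Matrix (Fin m) (Fin m) ℤ) : ℕ :=
  Set.ncard {U : Matrix (Fin m) (Fin m) ℤ | Uᵀ * A * U = A}

/-- Integral equivalence (isometry) of Gram matrices. -/
def ZEquiv {m : ℕ} (A B : Matrix (Fin m) (Fin m) ℤ) : Prop :=
  ∃ U : Matrix (Fin m) (Fin m) ℤ, IsUnit U.det ∧ Uᵀ * A * U = B

/-- Equivalence of Gram matrices over the `p`-adic integers `ℤ_p`. -/
def ZpEquiv {m : ℕ} (p : ℕ) (hp : p.Prime) (A B : Matrix (Fin m) (Fin m) ℤ) : Prop :=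
  have : Fact p.Prime := ⟨hp⟩
  ∃ U : Matrix (Fin m) (Fin m) ℤ_[p], IsUnit U.det ∧
    Uᵀ * A.map (Int.cast : ℤ → ℤ_[p]) * U = B.map (Int.cast : ℤ → ℤ_[p])

/-- `A` is positive definite (over `ℝ`). -/
def PosDefMat {m : ℕ} (A : Matrix (Fin m) (Fin m) ℤ) : Prop :=
  (A.map (Int.cast : ℤ → ℝ)).PosDef

/-- Two positive definite integral lattices are in the same genus iff they are equivalent
over all `ℤ_p` (and over `ℝ`, which is automatic for positive definite ones). -/
def InSameGenus {m : ℕ} (A B : Matrix (Fin m) (Fin m) ℤ) : Prop :=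
  PosDefMat A ∧ PosDefMat B ∧ ∀ (p : ℕ) (hp : p.Prime), ZpEquiv p hp A B

/-- The reflection in the vector `v` of the quadratic space with Gram matrix `A`. -/
def reflMat {K : Type*} [Field K] {m : ℕ} (A : Matrix (Fin m) (Fin m) K) (v : Fin m → K) :
    Matrix (Fin m) (Fin m) K :=
  1 - (2 / (v ⬝ᵥ A.mulVec v)) • (Matrix.vecMulVec v v * A)

/-- `U` is a rotation (proper isometry) of the quadratic space with Gram matrix `A`
with spinor norm (represented by) `θ`: `U` is a product of an even number of reflections
in anisotropic vectors `v l`, and `θ = ∏ q(v l)`. -/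
def IsRotationWithSpinorNorm {K : Type*} [Field K] {m : ℕ} (A U : Matrix (Fin m) (Fin m) K)
    (θ : K) : Prop :=
  ∃ (r : ℕ) (v : Fin r → (Fin m → K)), Even r ∧ (∀ l, v l ⬝ᵥ A.mulVec (v l) ≠ 0) ∧
    U = (List.ofFn fun l => reflMat A (v l)).prod ∧
    θ = ∏ l : Fin r, (v l ⬝ᵥ A.mulVec (v l)) / 2

/-- The lattices with Gram matrices `A` and `B` lie in the same spinor genus: there is a
rational isometry `S` of `A` and a rational equivalence `C` from `A` to `B` which at every
prime `p` factors as `S` times a rotation of trivial spinor norm times a `ℤ_p`-unit. -/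
def SameSpinorGenus {m : ℕ} (A B : Matrix (Fin m) (Fin m) ℤ) : Prop :=
  InSameGenus A B ∧
  ∃ C S : Matrix (Fin m) (Fin m) ℚ,
    Cᵀ * A.map (Int.cast : ℤ → ℚ) * C = B.map (Int.cast : ℤ → ℚ) ∧
    Sᵀ * A.map (Int.cast : ℤ → ℚ) * S = A.map (Int.cast : ℤ → ℚ) ∧
    ∀ (p : ℕ) (hp : p.Prime),
      have : Fact p.Prime := ⟨hp⟩
      ∃ (Sig : Matrix (Fin m) (Fin m) ℚ_[p]) (θ c : ℚ_[p]) (U : Matrix (Fin m) (Fin m) ℤ_[p]),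
        IsRotationWithSpinorNorm (A.map (Int.cast : ℤ → ℚ_[p])) Sig θ ∧ c ≠ 0 ∧ θ = c ^ 2 ∧
        IsUnit U.det ∧
        C.map (Rat.cast : ℚ → ℚ_[p]) =
          S.map (Rat.cast : ℚ → ℚ_[p]) * Sig * U.map (fun x : ℤ_[p] => (x : ℚ_[p]))

/-- A system of representatives for the isometry classes of lattices in the genus of `A`. -/
structure GenusReps {m : ℕ} (A : Matrix (Fin m) (Fin m) ℤ) where
  reps : Finset (Matrix (Fin m) (Fin m) ℤ)
  mem_genus : ∀ B ∈ reps, InSameGenus A B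
  complete : ∀ B, InSameGenus A B → ∃ C ∈ reps, ZEquiv C B
  inequiv : ∀ B ∈ reps, ∀ C ∈ reps, ZEquiv B C → B = C

/-- The mass `μ` of the genus of `A`. -/
def mass {m : ℕ} {A : Matrix (Fin m) (Fin m) ℤ} (G : GenusReps A) : ℝ :=
  ∑ B ∈ G.reps, (1 : ℝ) / autMat B

/-- Siegel's weighted average `r(gen(A), T)` of the representation numbers of the binary
form `T` over the classes in the genus of `A`. -/
def genusAvgBinary {m : ℕ} {A : Matrix (Fin m) (Fin m) ℤ} (G : GenusReps A)
    (T : Matrix (Fin 2) (Fin 2) ℤ) : ℝ :=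
  (∑ B ∈ G.reps, (rMat B T : ℝ) / autMat B) / mass G

/-- Siegel's weighted average `r(gen(A), t)` of the representation numbers of the integer
`t` over the classes in the genus of `A`. -/
def genusAvgQuad {m : ℕ} {A : Matrix (Fin m) (Fin m) ℤ} (G : GenusReps A) (t : ℤ) : ℝ :=
  (∑ B ∈ G.reps, (rQuad B t : ℝ) / autMat B) / mass G

/-- `o_max`: the maximal order of the automorphism group of a lattice in the genus of `A`. -/
def oMax {m : ℕ} {A : Matrix (Fin m) (Fin m) ℤ} (G : GenusReps A) : ℕ :=
  G.reps.sup autMat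

/-- `ℓ • A⁻¹` is again integral with even diagonal. -/
def EvenIntegralScaledInv {m : ℕ} (A : Matrix (Fin m) (Fin m) ℤ) (ℓ : ℕ) : Prop :=
  (∀ i j, ∃ c : ℤ, (ℓ : ℚ) * (A.map (Int.cast : ℤ → ℚ))⁻¹ i j = c) ∧
    ∀ i, ∃ c : ℤ, (ℓ : ℚ) * (A.map (Int.cast : ℤ → ℚ))⁻¹ i i = 2 * c

/-- `ℓ` is the level of the (even) lattice with bilinear Gram matrix `A`. -/
def IsLevelOf {m : ℕ} (A : Matrix (Fin m) (Fin m) ℤ) (ℓ : ℕ) : Prop :=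
  0 < ℓ ∧ EvenIntegralScaledInv A ℓ ∧
    ∀ ℓ' : ℕ, 0 < ℓ' → EvenIntegralScaledInv A ℓ' → ℓ ∣ ℓ'

/-- `d` is represented primitively by (the `ℤ_p`-completion of) the ternary lattice with Gram
matrix `A` over every `ℤ_p`. -/
def LocallyPrimitivelyRepresents (A : Matrix (Fin 3) (Fin 3) ℤ) (d : ℤ) : Prop :=
  ∀ (p : ℕ) (hp : p.Prime),
    have : Fact p.Prime := ⟨hp⟩
    ∃ x : Fin 3 → ℤ_[p], (∃ i, IsUnit (x i)) ∧
      x ⬝ᵥ (A.map (Int.cast : ℤ → ℤ_[p])).mulVec x = ((2 * d : ℤ) : ℤ_[p])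

/-- `d` is represented by the ternary lattice with Gram matrix `A` over every `ℤ_p`. -/
def LocallyRepresents (A : Matrix (Fin 3) (Fin 3) ℤ) (d : ℤ) : Prop :=
  ∀ (p : ℕ) (hp : p.Prime),
    have : Fact p.Prime := ⟨hp⟩
    ∃ x : Fin 3 → ℤ_[p], x ⬝ᵥ (A.map (Int.cast : ℤ → ℤ_[p])).mulVec x = ((2 * d : ℤ) : ℤ_[p])

/-- The prime `p` is split in the imaginary quadratic field `ℚ(√-d)`. -/
def SplitIn (d : ℤ) (p : ℕ) (hp : p.Prime) : Prop :=
  if p = 2 then (-d) % 8 = 1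
  else
    have : Fact p.Prime := ⟨hp⟩
    legendreSym p (-d) = 1

/-- The prime `p` is inert in the imaginary quadratic field `ℚ(√-d)`. -/
def InertIn (d : ℤ) (p : ℕ) (hp : p.Prime) : Prop :=
  if p = 2 then (-d) % 8 = 5
  else
    have : Fact p.Prime := ⟨hp⟩
    legendreSym p (-d) = -1

end Rep
namespace Rep

/-! ### Quaternion algebras over ℚ, Eichler orders, ideal classes -/

/-- The reduced trace of a quaternion. -/
def trd {a b : ℚ} (x : ℍ[ℚ, a, b]) : ℚ := 2 * x.re

/-- The reduced norm `n` of a quaternion. -/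
def nrd {a b : ℚ} (x : ℍ[ℚ, a, b]) : ℚ := (x * star x).re

/-- The bilinear form `b(x, y) = tr(x ȳ)` associated to the reduced norm form;
note `b(x, x) = 2 n(x)`. -/
def qbil {a b : ℚ} (x y : ℍ[ℚ, a, b]) : ℚ := (x * star y + y * star x).re

/-- The quaternion algebra `(a, b / ℚ)` is ramified at infinity, i.e. `ℍ[ℝ, a, b]` is a
division algebra. -/
def RamifiedAtInfinity (a b : ℚ) : Prop :=
  ∀ x : ℍ[ℝ, (a : ℝ), (b : ℝ)], x ≠ 0 → IsUnit x

/-- The quaternion algebra `(a, b / ℚ)` is ramified at the prime `p`, i.e. `ℍ[ℚ_p, a, b]`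
is a division algebra. -/
def RamifiedAt (a b : ℚ) (p : ℕ) (hp : p.Prime) : Prop :=
  have : Fact p.Prime := ⟨hp⟩
  ∀ x : ℍ[ℚ_[p], (a : ℚ_[p]), (b : ℚ_[p])], x ≠ 0 → IsUnit x

/-- `M` is a full `ℤ`-lattice of rank `m` in the quaternion algebra. -/
def IsLattice {a b : ℚ} (m : ℕ) (M : Submodule ℤ ℍ[ℚ, a, b]) : Prop :=
  ∃ v : Fin m → ℍ[ℚ, a, b], LinearIndependent ℚ v ∧ Submodule.span ℤ (Set.range v) = M

/-- `A` is a Gram matrix (with respect to the bilinear form `b(x,y) = tr(x ȳ)`) of a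
`ℤ`-basis of (the `ℤ`-span of) `M`. -/
def IsGramOf {a b : ℚ} {m : ℕ} (M : Set ℍ[ℚ, a, b]) (A : Matrix (Fin m) (Fin m) ℤ) : Prop :=
  ∃ v : Fin m → ℍ[ℚ, a, b], LinearIndependent ℚ v ∧
    Submodule.span ℤ (Set.range v) = Submodule.span ℤ M ∧
    ∀ i j, (A i j : ℚ) = qbil (v i) (v j)

/-- `A` is a Gram matrix of `M` for the quadratic form rescaled by the factor `s`. -/
def IsGramOfScaled {a b : ℚ} {m : ℕ} (s : ℕ) (M : Set ℍ[ℚ, a, b])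
    (A : Matrix (Fin m) (Fin m) ℤ) : Prop :=
  ∃ v : Fin m → ℍ[ℚ, a, b], LinearIndependent ℚ v ∧
    Submodule.span ℤ (Set.range v) = Submodule.span ℤ M ∧
    ∀ i j, (A i j : ℚ) = s * qbil (v i) (v j)

/-- An order in the quaternion algebra: a full lattice which is a subring. -/
def IsOrder {a b : ℚ} (O : Submodule ℤ ℍ[ℚ, a, b]) : Prop :=
  IsLattice 4 O ∧ (1 : ℍ[ℚ, a, b]) ∈ O ∧ ∀ x ∈ O, ∀ y ∈ O, x * y ∈ O

/-- The left order of a lattice `I`. -/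
def leftOrderSet {a b : ℚ} (I : Set ℍ[ℚ, a, b]) : Set ℍ[ℚ, a, b] :=
  {x | ∀ y ∈ I, x * y ∈ I}

/-- The right order of a lattice `I`. -/
def rightOrderSet {a b : ℚ} (I : Set ℍ[ℚ, a, b]) : Set ℍ[ℚ, a, b] :=
  {x | ∀ y ∈ I, y * x ∈ I}

/-- The order `O` has reduced discriminant `N`, i.e. the Gram matrix of the norm form on `O`
has determinant `N²`.  For squarefree `N` this characterizes the Eichler orders of level `N`
(hereditary orders). -/
def HasReducedDiscriminant {a b : ℚ} (O : Submodule ℤ ℍ[ℚ, a, b]) (N : ℕ) : Prop :=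
  ∃ A : Matrix (Fin 4) (Fin 4) ℤ, IsGramOf (O : Set ℍ[ℚ, a, b]) A ∧ A.det = (N : ℤ) ^ 2

/-- The pairs `(x, y) ∈ M × M` representing the binary form `T = (2a, b; b, 2c)`, i.e. with
`n(x) = a`, `b(x,y) = b`, `n(y) = c` (equivalently, with bilinear Gram matrix `T`). -/
def repPairs {a b : ℚ} (M : Set ℍ[ℚ, a, b]) (T : Matrix (Fin 2) (Fin 2) ℤ) :
    Set (ℍ[ℚ, a, b] × ℍ[ℚ, a, b]) :=
  {xy | xy.1 ∈ M ∧ xy.2 ∈ M ∧ qbil xy.1 xy.1 = T 0 0 ∧ qbil xy.1 xy.2 = T 0 1 ∧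
    qbil xy.2 xy.2 = T 1 1}

/-- `r(M, T)`: the number of representations of the binary form `T` by the quaternary
lattice `M` (with the reduced norm as quadratic form). -/
def rLat {a b : ℚ} (M : Set ℍ[ℚ, a, b]) (T : Matrix (Fin 2) (Fin 2) ℤ) : ℕ :=
  Set.ncard (repPairs M T)

/-- As `rLat`, but with the quadratic form rescaled by the factor `s`. -/
def rLatScaled {a b : ℚ} (s : ℕ) (M : Set ℍ[ℚ, a, b]) (T : Matrix (Fin 2) (Fin 2) ℤ) : ℕ :=
  Set.ncard {xy : ℍ[ℚ, a, b] × ℍ[ℚ, a, b] | xy.1 ∈ M ∧ xy.2 ∈ M ∧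
    (s : ℚ) * qbil xy.1 xy.1 = T 0 0 ∧ (s : ℚ) * qbil xy.1 xy.2 = T 0 1 ∧
    (s : ℚ) * qbil xy.2 xy.2 = T 1 1}

/-- The averaged representation number `r(M, d) = Σ_T r(M, T)/ε(T)`, the sum over the
`SL₂(ℤ)`-classes of integral binary forms of discriminant `-d`. -/
def rAvg {a b : ℚ} (M : Set ℍ[ℚ, a, b]) (d : ℤ) : ℝ :=
  ∑ᶠ T ∈ reducedForms d, (rLat M T : ℝ) / autCount T

/-- The dual lattice `M^#` of `M` with respect to `b(x,y) = tr(x ȳ)`. -/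
def dualLattice {a b : ℚ} (M : Set ℍ[ℚ, a, b]) : Set ℍ[ℚ, a, b] :=
  {x | ∀ y ∈ M, ∃ m : ℤ, qbil x y = m}

/-- The partial localization `M[1/s]` of `M`. -/
def locInv {a b : ℚ} (s : ℕ) (M : Submodule ℤ ℍ[ℚ, a, b]) : Set ℍ[ℚ, a, b] :=
  {x | ∃ k : ℕ, ((s : ℚ) ^ k) • x ∈ M}

/-- The data of an Eichler order `R` of squarefree level `N = N₁N₂` in the (definite)
quaternion algebra over `ℚ` ramified exactly at `∞` and the primes dividing `N₁`, together
with the ideals `I_ij = y_i R y_j⁻¹` coming from a double coset decomposition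
`D^×_𝔸 = ∪_j D^× y_j R^×_𝔸` (equivalently: a complete system of representatives of the
left ideal classes and their linking ideals), normalized to have reduced norm `ℤ`. -/
structure EichlerSetting (N₁ N₂ : ℕ) where
  a : ℚ
  b : ℚ
  N₁_pos : 0 < N₁
  N₂_pos : 0 < N₂
  squarefree : Squarefree (N₁ * N₂)
  odd_ram : Odd N₁.primeFactors.card
  ram_inf : RamifiedAtInfinity a b
  ram_iff : ∀ (p : ℕ) (hp : p.Prime), RamifiedAt a b p hp ↔ p ∣ N₁
  /-- the class number of the Eichler order -/
  h : ℕ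
  h_pos : 0 < h
  /-- the orders `R_i = y_i R y_i⁻¹`; `R = R_0` -/
  Rord : Fin h → Submodule ℤ ℍ[ℚ, a, b]
  /-- the ideals `I_ij = y_i R y_j⁻¹` -/
  I : Fin h → Fin h → Submodule ℤ ℍ[ℚ, a, b]
  Rord_order : ∀ i, IsOrder (Rord i)
  Rord_disc : ∀ i, HasReducedDiscriminant (Rord i) (N₁ * N₂)
  I_lattice : ∀ i j, IsLattice 4 (I i j)
  I_diag : ∀ i, I i i = Rord i
  I_left : ∀ i j, leftOrderSet (I i j : Set ℍ[ℚ, a, b]) = (Rord i : Set ℍ[ℚ, a, b])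
  I_right : ∀ i j, rightOrderSet (I i j : Set ℍ[ℚ, a, b]) = (Rord j : Set ℍ[ℚ, a, b])
  I_nrd_integral : ∀ i j, ∀ x ∈ I i j, ∃ m : ℤ, nrd x = m
  I_nrd_primitive : ∀ i j, (1 : ℚ) ∈ Submodule.span ℤ (nrd '' (I i j : Set ℍ[ℚ, a, b]))
  /-- for fixed `i`, the `I i j` represent all classes of left `R_i`-ideals -/
  classes_complete : ∀ (i : Fin h) (J : Submodule ℤ ℍ[ℚ, a, b]), IsLattice 4 J →
    leftOrderSet (J : Set ℍ[ℚ, a, b]) = (Rord i : Set ℍ[ℚ, a, b]) →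
    ∃ (j : Fin h) (u : (ℍ[ℚ, a, b])ˣ),
      J = Submodule.map (LinearMap.mulRight ℤ (u : ℍ[ℚ, a, b])) (I i j)
  classes_distinct : ∀ (i j j' : Fin h) (u : (ℍ[ℚ, a, b])ˣ),
    I i j' = Submodule.map (LinearMap.mulRight ℤ (u : ℍ[ℚ, a, b])) (I i j) → j = j'

namespace EichlerSetting

variable {N₁ N₂ : ℕ} (S : EichlerSetting N₁ N₂)

/-- The Eichler order `R` itself. -/
def R : Submodule ℤ ℍ[ℚ, S.a, S.b] := S.Rord ⟨0, S.h_pos⟩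

/-- The ternary lattice `L_i = {x ∈ ℤ·1 + 2R_i | tr(x) = 0}`. -/
def L (i : Fin S.h) : Set ℍ[ℚ, S.a, S.b] :=
  {x | (∃ m : ℤ, ∃ r ∈ S.Rord i, x = m • (1 : ℍ[ℚ, S.a, S.b]) + 2 • r) ∧ x + star x = 0}

/-- `e_i`, the number of units of the order `R_i`. -/
def units (i : Fin S.h) : ℕ :=
  Set.ncard {x : ℍ[ℚ, S.a, S.b] | x ∈ S.Rord i ∧ nrd x = 1}

/-- The underlying lattice `I_ij^# ∩ I_ij[1/s]` of the rescaled partial dual `I_ij^{*,s}`. -/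
def pd (i j : Fin S.h) (s : ℕ) : Set ℍ[ℚ, S.a, S.b] :=
  dualLattice (S.I i j : Set ℍ[ℚ, S.a, S.b]) ∩ locInv s (S.I i j)

/-- `r(rpd(I_ij, N'), T) = Σ_{s ∣ N'} r(I_ij^{*,s}, T)`: the total number of representations
of `T` by the rescaled partial duals `I_ij^{*,s}`, `s ∣ N'`. -/
def rRpd (i j : Fin S.h) (N' : ℕ) (T : Matrix (Fin 2) (Fin 2) ℤ) : ℕ :=
  ∑ s ∈ N'.divisors, rLatScaled s (S.pd i j s) T

/-- `r(rpd(I_ij, N'), d) = Σ_{s ∣ N'} r(I_ij^{*,s}, d)`, averaged over the classes of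
binary forms of discriminant `-d`. -/
def rRpdAvg (i j : Fin S.h) (N' : ℕ) (d : ℤ) : ℝ :=
  ∑ᶠ T ∈ reducedForms d, (S.rRpd i j N' T : ℝ) / autCount T

end EichlerSetting

end Rep

namespace Rep

/-! ### Basic identities -/

section Basics

variable {a b : ℚ}

/-- the integers inside `ℚ`. -/
abbrev ZZ : Subring ℚ := (Int.castRingHom ℚ).range

theorem mem_ZZ {q : ℚ} : q ∈ ZZ ↔ ∃ m : ℤ, q = m := by
  constructor
  · rintro ⟨m, hm⟩
    exact ⟨m, by simpa using hm.symm⟩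
  · rintro ⟨m, hm⟩
    exact ⟨m, by simpa using hm.symm⟩

theorem int_mem_ZZ (m : ℤ) : (m : ℚ) ∈ ZZ := mem_ZZ.2 ⟨m, rfl⟩

theorem nat_mem_ZZ (m : ℕ) : (m : ℚ) ∈ ZZ := mem_ZZ.2 ⟨m, by simp⟩

theorem sq_mem_ZZ {q : ℚ} (h : q ^ 2 ∈ ZZ) : q ∈ ZZ := by
  obtain ⟨m, hm⟩ := mem_ZZ.1 h
  have hint : IsIntegral ℤ q := by
    refine IsIntegral.of_pow (n := 2) (by norm_num) ?_
    rw [hm]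
    exact isIntegral_algebraMap
  obtain ⟨y, hy⟩ := IsIntegrallyClosed.isIntegral_iff.1 hint
  exact mem_ZZ.2 ⟨y, by simpa using hy.symm⟩

theorem nrd_eq (x : ℍ[ℚ, a, b]) :
    nrd x = x.re ^ 2 - a * x.imI ^ 2 - b * x.imJ ^ 2 + a * b * x.imK ^ 2 := by
  simp [nrd]
  ring

theorem qbil_eq (x y : ℍ[ℚ, a, b]) :
    qbil x y = 2 * (x.re * y.re - a * x.imI * y.imI - b * x.imJ * y.imJ
      + a * b * x.imK * y.imK) := by
  simp [qbil]
  ring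

theorem qbil_self (x : ℍ[ℚ, a, b]) : qbil x x = 2 * nrd x := by
  rw [qbil_eq, nrd_eq]; ring

theorem qbil_comm (x y : ℍ[ℚ, a, b]) : qbil x y = qbil y x := by
  rw [qbil_eq, qbil_eq]; ring

theorem nrd_add (x y : ℍ[ℚ, a, b]) : nrd (x + y) = nrd x + nrd y + qbil x y := by
  rw [nrd_eq, nrd_eq, nrd_eq, qbil_eq]; simp; ring

theorem nrd_mul (x y : ℍ[ℚ, a, b]) : nrd (x * y) = nrd x * nrd y := by
  rw [nrd_eq, nrd_eq, nrd_eq]; simp; ring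

theorem nrd_star (x : ℍ[ℚ, a, b]) : nrd (star x) = nrd x := by
  rw [nrd_eq, nrd_eq]; simp

theorem nrd_smul (q : ℚ) (x : ℍ[ℚ, a, b]) : nrd (q • x) = q ^ 2 * nrd x := by
  rw [nrd_eq, nrd_eq]; simp; ring

theorem nrd_one : nrd (1 : ℍ[ℚ, a, b]) = 1 := by
  rw [nrd_eq]; simp

/-- the bilinear form as a bundled map. -/
def BB : ℍ[ℚ, a, b] →ₗ[ℚ] ℍ[ℚ, a, b] →ₗ[ℚ] ℚ :=
  LinearMap.mk₂ ℚ qbil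
    (fun x y z => by simp only [qbil_eq]; simp; ring)
    (fun c x y => by simp only [qbil_eq]; simp; ring)
    (fun x y z => by simp only [qbil_eq]; simp; ring)
    (fun c x y => by simp only [qbil_eq]; simp; ring)

theorem BB_apply (x y : ℍ[ℚ, a, b]) : BB x y = qbil x y := rfl

theorem qbil_add_left (x y z : ℍ[ℚ, a, b]) : qbil (x + y) z = qbil x z + qbil y z := by
  simp [← BB_apply]

theorem qbil_add_right (x y z : ℍ[ℚ, a, b]) : qbil x (y + z) = qbil x y + qbil x z := by
  simp [← BB_apply]

theorem qbil_smul_left (q : ℚ) (x z : ℍ[ℚ, a, b]) : qbil (q • x) z = q * qbil x z := by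
  simp [← BB_apply]

theorem qbil_smul_right (q : ℚ) (x z : ℍ[ℚ, a, b]) : qbil x (q • z) = q * qbil x z := by
  simp [← BB_apply]

theorem qbil_sum_left {ι : Type*} (s : Finset ι) (f : ι → ℍ[ℚ, a, b]) (z : ℍ[ℚ, a, b]) :
    qbil (∑ k ∈ s, f k) z = ∑ k ∈ s, qbil (f k) z := by
  simp [← BB_apply]

theorem qbil_sum_right {ι : Type*} (s : Finset ι) (f : ι → ℍ[ℚ, a, b]) (z : ℍ[ℚ, a, b]) :
    qbil z (∑ k ∈ s, f k) = ∑ k ∈ s, qbil z (f k) := by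
  simp [← BB_apply]

theorem qbil_mul_left (z x y : ℍ[ℚ, a, b]) : qbil (z * x) y = qbil x (star z * y) := by
  simp only [qbil_eq]; simp; ring

theorem qbil_mul_right (z x y : ℍ[ℚ, a, b]) : qbil (x * z) y = qbil x (y * star z) := by
  simp only [qbil_eq]; simp; ring

theorem qbil_mul_mul (z x y : ℍ[ℚ, a, b]) : qbil (x * z) (y * z) = nrd z * qbil x y := by
  simp only [qbil_eq, nrd_eq]; simp; ring

theorem qbil_trace (r x y : ℍ[ℚ, a, b]) :
    qbil (x * r) y + qbil x (y * r) = qbil r 1 * qbil x y := by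
  simp only [qbil_eq]; simp; ring

theorem mul_star_eq (x : ℍ[ℚ, a, b]) : x * star x = nrd x • (1 : ℍ[ℚ, a, b]) := by
  ext <;> simp [nrd_eq] <;> ring

theorem star_mul_eq (x : ℍ[ℚ, a, b]) : star x * x = nrd x • (1 : ℍ[ℚ, a, b]) := by
  ext <;> simp [nrd_eq] <;> ring

theorem star_eq (x : ℍ[ℚ, a, b]) : star x = qbil x 1 • (1 : ℍ[ℚ, a, b]) - x := by
  ext <;> simp [qbil_eq] <;> ring

/-- coordinate matrix of a quadruple -/
def cm (v : Fin 4 → ℍ[ℚ, a, b]) : Matrix (Fin 4) (Fin 4) ℚ :=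
  Matrix.of fun i => ![(v i).re, (v i).imI, (v i).imJ, (v i).imK]

/-- the Gram matrix of the standard basis -/
def EE (a b : ℚ) : Matrix (Fin 4) (Fin 4) ℚ := Matrix.diagonal ![2, -2 * a, -2 * b, 2 * a * b]

theorem det_EE : (EE a b).det = (4 * a * b) ^ 2 := by
  simp [EE, Matrix.det_diagonal, Fin.prod_univ_four]
  ring

theorem gram_cm (v w : Fin 4 → ℍ[ℚ, a, b]) :
    Matrix.of (fun i j => qbil (v i) (w j)) = cm v * EE a b * (cm w)ᵀ := by
  ext i j
  simp [cm, EE, Matrix.mul_apply, Fin.sum_univ_four, qbil_eq, Matrix.diagonal_apply]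
  ring

/-- the matrix of right multiplication by `x` -/
def RM (x : ℍ[ℚ, a, b]) : Matrix (Fin 4) (Fin 4) ℚ :=
  !![x.re, x.imI, x.imJ, x.imK;
     a * x.imI, x.re, a * x.imK, x.imJ;
     b * x.imJ, - (b * x.imK), x.re, - x.imI;
     - (a * b * x.imK), b * x.imJ, - (a * x.imI), x.re]

theorem cm_mul_right (v : Fin 4 → ℍ[ℚ, a, b]) (x : ℍ[ℚ, a, b]) :
    cm (fun i => v i * x) = cm v * RM x := by
  ext i j
  fin_cases j <;> simp [cm, RM, Matrix.mul_apply, Fin.sum_univ_four] <;> ring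

theorem det4 {K : Type*} [CommRing K] (M : Matrix (Fin 4) (Fin 4) K) : M.det =
    M 0 0 * (M 1 1 * (M 2 2 * M 3 3 - M 2 3 * M 3 2) - M 1 2 * (M 2 1 * M 3 3 - M 2 3 * M 3 1)
      + M 1 3 * (M 2 1 * M 3 2 - M 2 2 * M 3 1))
    - M 0 1 * (M 1 0 * (M 2 2 * M 3 3 - M 2 3 * M 3 2) - M 1 2 * (M 2 0 * M 3 3 - M 2 3 * M 3 0)
      + M 1 3 * (M 2 0 * M 3 2 - M 2 2 * M 3 0))
    + M 0 2 * (M 1 0 * (M 2 1 * M 3 3 - M 2 3 * M 3 1) - M 1 1 * (M 2 0 * M 3 3 - M 2 3 * M 3 0)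
      + M 1 3 * (M 2 0 * M 3 1 - M 2 1 * M 3 0))
    - M 0 3 * (M 1 0 * (M 2 1 * M 3 2 - M 2 2 * M 3 1) - M 1 1 * (M 2 0 * M 3 2 - M 2 2 * M 3 0)
      + M 1 2 * (M 2 0 * M 3 1 - M 2 1 * M 3 0)) := by
  rw [Matrix.det_succ_row_zero]
  simp [Fin.sum_univ_four, Matrix.det_fin_three, Fin.succAbove, Matrix.submatrix_apply]
  ring

theorem det_RM (x : ℍ[ℚ, a, b]) : (RM x).det = nrd x ^ 2 := by
  rw [det4, nrd_eq]
  simp [RM]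
  ring

theorem cm_comb (C : Matrix (Fin 4) (Fin 4) ℤ) (v w : Fin 4 → ℍ[ℚ, a, b])
    (h : ∀ i, w i = ∑ j, C i j • v j) : cm w = C.map (Int.cast : ℤ → ℚ) * cm v := by
  ext i j
  rw [Matrix.mul_apply]
  fin_cases j <;> simp [cm, h, Fin.sum_univ_four]

theorem cm_det_ne {v : Fin 4 → ℍ[ℚ, a, b]} (hv : LinearIndependent ℚ v) : (cm v).det ≠ 0 := by
  have h := hv.map' (QuaternionAlgebra.linearEquivTuple a 0 b : ℍ[ℚ, a, b] →ₗ[ℚ] (Fin 4 → ℚ))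
    (LinearEquiv.ker _)
  have h2 : LinearIndependent ℚ (cm v).row := by
    have : (cm v).row = ⇑(QuaternionAlgebra.linearEquivTuple a 0 b) ∘ v := by
      ext i j
      fin_cases j <;> rfl
    rw [this]
    exact h
  have h3 := (Matrix.linearIndependent_rows_iff_isUnit).1 h2
  exact ((Matrix.isUnit_iff_isUnit_det _).1 h3).ne_zero

/-- The fundamental four-term identity. -/
theorem four_term (x : Fin 4 → ℍ[ℚ, a, b]) :
    2 * qbil (x 0 * star (x 1) * x 2) (x 3) =
      qbil (x 0) (x 1) * qbil (x 2) (x 3) - qbil (x 0) (x 2) * qbil (x 1) (x 3)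
        + qbil (x 0) (x 3) * qbil (x 1) (x 2) - 4 * a * b * (cm x).det := by
  rw [det4]
  simp only [qbil_eq]
  simp [cm]
  ring

end Basics

/-! ### Lattices with a basis -/

section Lattices

variable {a b : ℚ}

/-- `v` is a `ℤ`-basis of `I` with Gram matrix `A`. -/
structure Lat (I : Submodule ℤ ℍ[ℚ, a, b]) (v : Fin 4 → ℍ[ℚ, a, b])
    (A : Matrix (Fin 4) (Fin 4) ℤ) : Prop where
  li : LinearIndependent ℚ v
  span : Submodule.span ℤ (Set.range v) = I
  gram : ∀ i j, (A i j : ℚ) = qbil (v i) (v j)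

theorem isGramOf_iff (I : Submodule ℤ ℍ[ℚ, a, b]) (A : Matrix (Fin 4) (Fin 4) ℤ) :
    IsGramOf (I : Set ℍ[ℚ, a, b]) A ↔ ∃ v, Lat I v A := by
  unfold IsGramOf
  rw [Submodule.span_eq]
  constructor
  · rintro ⟨v, h1, h2, h3⟩
    exact ⟨v, h1, h2, h3⟩
  · rintro ⟨v, h1, h2, h3⟩
    exact ⟨v, h1, h2, h3⟩

variable {I : Submodule ℤ ℍ[ℚ, a, b]} {v : Fin 4 → ℍ[ℚ, a, b]} {A : Matrix (Fin 4) (Fin 4) ℤ}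

theorem mem_dual {I : Submodule ℤ ℍ[ℚ, a, b]} {x : ℍ[ℚ, a, b]} :
    x ∈ dualLattice (I : Set ℍ[ℚ, a, b]) ↔ ∀ y ∈ I, qbil x y ∈ ZZ := by
  simp only [dualLattice, Set.mem_ofPred_eq, SetLike.mem_coe, mem_ZZ]

theorem Lat.mem_iff (h : Lat I v A) {x : ℍ[ℚ, a, b]} :
    x ∈ I ↔ ∃ c : Fin 4 → ℤ, x = ∑ k, c k • v k := by
  rw [← h.span, Submodule.mem_span_range_iff_exists_fun]
  simp only [eq_comm]

theorem Lat.basis_mem (h : Lat I v A) (k : Fin 4) : v k ∈ I := by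
  rw [← h.span]
  exact Submodule.subset_span ⟨k, rfl⟩

theorem Lat.exists_mat (h : Lat I v A) {w : Fin 4 → ℍ[ℚ, a, b]} (hw : ∀ i, w i ∈ I) :
    ∃ C : Matrix (Fin 4) (Fin 4) ℤ, (∀ i, w i = ∑ j, C i j • v j) ∧
      cm w = C.map (Int.cast : ℤ → ℚ) * cm v := by
  choose C hC using fun i => h.mem_iff.1 (hw i)
  exact ⟨C, hC, cm_comb C v w hC⟩

theorem Lat.qbil_mem (h : Lat I v A) {x y : ℍ[ℚ, a, b]} (hx : x ∈ I) (hy : y ∈ I) :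
    qbil x y ∈ ZZ := by
  obtain ⟨c, rfl⟩ := h.mem_iff.1 hx
  obtain ⟨d, rfl⟩ := h.mem_iff.1 hy
  rw [qbil_sum_left]
  refine sum_mem fun i _ => ?_
  rw [qbil_sum_right]
  refine sum_mem fun j _ => ?_
  rw [← Int.cast_smul_eq_zsmul ℚ, ← Int.cast_smul_eq_zsmul ℚ, qbil_smul_left, qbil_smul_right,
    ← h.gram]
  exact mul_mem (int_mem_ZZ _) (mul_mem (int_mem_ZZ _) (int_mem_ZZ _))

theorem Lat.gram_eq (h : Lat I v A) :
    A.map (Int.cast : ℤ → ℚ) = cm v * EE a b * (cm v)ᵀ := by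
  rw [← gram_cm]
  ext i j
  simp [h.gram]

theorem det_map_cast (C : Matrix (Fin 4) (Fin 4) ℤ) :
    (C.map (Int.cast : ℤ → ℚ)).det = (C.det : ℚ) := by
  exact ((Int.castRingHom ℚ).map_det C).symm

theorem Lat.det_eq (h : Lat I v A) : (A.det : ℚ) = (4 * a * b * (cm v).det) ^ 2 := by
  rw [← det_map_cast, h.gram_eq, Matrix.det_mul, Matrix.det_mul, Matrix.det_transpose, det_EE]
  ring

theorem Lat.exists_sqrt (h : Lat I v A) :
    ∃ d : ℤ, (d : ℚ) = 4 * a * b * (cm v).det ∧ A.det = d ^ 2 := by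
  have h1 : 4 * a * b * (cm v).det ∈ ZZ := by
    apply sq_mem_ZZ
    rw [← h.det_eq]
    exact int_mem_ZZ _
  obtain ⟨d, hd⟩ := mem_ZZ.1 h1
  refine ⟨d, hd.symm, ?_⟩
  have := h.det_eq
  rw [hd] at this
  exact_mod_cast this

theorem Lat.det_ne (h : Lat I v A) (ha : a ≠ 0) (hb : b ≠ 0) : A.det ≠ 0 := by
  have h1 := h.det_eq
  have h2 : (4 * a * b * (cm v).det) ^ 2 ≠ 0 := by
    have := cm_det_ne h.li
    positivity
  rw [← h1] at h2
  exact_mod_cast h2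

theorem Lat.expand (h : Lat I v A) (x : ℍ[ℚ, a, b]) : ∃ c : Fin 4 → ℚ, x = ∑ k, c k • v k := by
  have hc : Fintype.card (Fin 4) = Module.finrank ℚ ℍ[ℚ, a, b] := by
    rw [QuaternionAlgebra.finrank_eq_four]; simp
  let B := basisOfLinearIndependentOfCardEqFinrank h.li hc
  refine ⟨fun k => B.repr x k, ?_⟩
  have := B.sum_repr x
  simp only [B, coe_basisOfLinearIndependentOfCardEqFinrank] at this
  exact this.symm

theorem Lat.exists_W (h : Lat I v A) : ∃ W : Fin 4 → ℍ[ℚ, a, b], (∀ k, W k ∈ I) ∧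
    ∀ k m, qbil (W k) (v m) = if k = m then (A.det : ℚ) else 0 := by
  refine ⟨fun k => ∑ l, A.adjugate k l • v l, fun k => ?_, fun k m => ?_⟩
  · exact sum_mem fun l _ => I.smul_mem _ (h.basis_mem l)
  · have h1 := congrFun (congrFun (Matrix.adjugate_mul A) k) m
    rw [Matrix.mul_apply, Matrix.smul_apply, Matrix.one_apply] at h1
    rw [qbil_sum_left]
    have h2 : ∀ l, qbil (A.adjugate k l • v l) (v m) = ((A.adjugate k l * A l m : ℤ) : ℚ) := by
      intro l
      rw [← Int.cast_smul_eq_zsmul ℚ, qbil_smul_left, ← h.gram]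
      push_cast
      rfl
    simp only [h2]
    rw [← Int.cast_sum, h1]
    split_ifs <;> simp

theorem Lat.expand1 (h : Lat I v A) {W : Fin 4 → ℍ[ℚ, a, b]}
    (hW : ∀ k m, qbil (W k) (v m) = if k = m then (A.det : ℚ) else 0) (x : ℍ[ℚ, a, b]) :
    (A.det : ℚ) • x = ∑ k, qbil x (W k) • v k := by
  obtain ⟨c, rfl⟩ := h.expand x
  rw [Finset.smul_sum]
  refine Finset.sum_congr rfl fun k _ => ?_
  rw [qbil_sum_left, smul_smul]
  congr 1
  rw [Finset.sum_eq_single k]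
  · rw [qbil_smul_left, qbil_comm, hW, if_pos rfl, mul_comm]
  · intro l _ hl
    rw [qbil_smul_left, qbil_comm, hW, if_neg (Ne.symm hl), mul_zero]
  · simp

theorem Lat.nondeg (h : Lat I v A) (ha : a ≠ 0) (hb : b ≠ 0) {x : ℍ[ℚ, a, b]}
    (hx : ∀ m, qbil x (v m) = 0) : x = 0 := by
  obtain ⟨W, -, hW⟩ := h.exists_W
  have h1 := h.expand1 hW x
  have h2 : ∀ y, qbil x y = 0 := by
    intro y
    obtain ⟨c, rfl⟩ := h.expand y
    rw [qbil_sum_right]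
    exact Finset.sum_eq_zero fun k _ => by rw [qbil_smul_right, hx, mul_zero]
  simp only [h2, zero_smul, Finset.sum_const_zero] at h1
  have h3 : (A.det : ℚ) ≠ 0 := by exact_mod_cast h.det_ne ha hb
  exact (smul_eq_zero.1 h1).resolve_left h3

theorem Lat.expand2 (h : Lat I v A) (ha : a ≠ 0) (hb : b ≠ 0) {W : Fin 4 → ℍ[ℚ, a, b]}
    (hW : ∀ k m, qbil (W k) (v m) = if k = m then (A.det : ℚ) else 0) (x : ℍ[ℚ, a, b]) :
    (A.det : ℚ) • x = ∑ k, qbil x (v k) • W k := by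
  rw [← sub_eq_zero]
  apply h.nondeg ha hb
  intro m
  rw [sub_eq_add_neg, qbil_add_left, ← neg_one_smul ℚ, qbil_smul_left, qbil_smul_left,
    qbil_sum_left, Finset.sum_eq_single m]
  · rw [qbil_smul_left, hW, if_pos rfl]; ring
  · intro l _ hl
    rw [qbil_smul_left, hW, if_neg hl, mul_zero]
  · simp

theorem ZZ_smul_mem {q : ℚ} (hq : q ∈ ZZ) {x : ℍ[ℚ, a, b]} (hx : x ∈ I) : q • x ∈ I := by
  obtain ⟨m, rfl⟩ := mem_ZZ.1 hq
  rw [Int.cast_smul_eq_zsmul]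
  exact I.smul_mem _ hx

theorem Lat.det_smul_dual (h : Lat I v A) (ha : a ≠ 0) (hb : b ≠ 0) {x : ℍ[ℚ, a, b]}
    (hx : x ∈ dualLattice (I : Set ℍ[ℚ, a, b])) : (A.det : ℚ) • x ∈ I := by
  obtain ⟨W, hWI, hW⟩ := h.exists_W
  rw [h.expand2 ha hb hW]
  exact sum_mem fun k _ => ZZ_smul_mem (mem_dual.1 hx _ (h.basis_mem k)) (hWI k)

/-- the dual basis -/
theorem Lat.exists_dual_basis (h : Lat I v A) (ha : a ≠ 0) (hb : b ≠ 0) :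
    ∃ w : Fin 4 → ℍ[ℚ, a, b], (∀ k, w k ∈ dualLattice (I : Set ℍ[ℚ, a, b])) ∧
      (∀ k m, qbil (w k) (v m) = if k = m then 1 else 0) ∧
      ∀ x, x = ∑ k, qbil x (w k) • v k := by
  obtain ⟨W, hWI, hW⟩ := h.exists_W
  have h3 : (A.det : ℚ) ≠ 0 := by exact_mod_cast h.det_ne ha hb
  have hw : ∀ k m, qbil ((A.det : ℚ)⁻¹ • W k) (v m) = if k = m then 1 else 0 := by
    intro k m
    rw [qbil_smul_left, hW]
    split_ifs
    · exact inv_mul_cancel₀ h3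
    · simp
  refine ⟨fun k => (A.det : ℚ)⁻¹ • W k, fun k => ?_, hw, fun x => ?_⟩
  · rw [mem_dual]
    intro y hy
    obtain ⟨c, rfl⟩ := h.mem_iff.1 hy
    rw [qbil_sum_right]
    refine sum_mem fun l _ => ?_
    rw [← Int.cast_smul_eq_zsmul ℚ, qbil_smul_right, hw]
    refine mul_mem (int_mem_ZZ _) ?_
    split_ifs
    · exact one_mem _
    · exact zero_mem _
  · have h4 := h.expand1 hW x
    have h5 : x = (A.det : ℚ)⁻¹ • ((A.det : ℚ) • x) := by
      rw [smul_smul, inv_mul_cancel₀ h3, one_smul]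
    conv_lhs => rw [h5, h4, Finset.smul_sum]
    refine Finset.sum_congr rfl fun k _ => ?_
    rw [qbil_smul_right, smul_smul]

theorem Lat.double_dual (h : Lat I v A) (ha : a ≠ 0) (hb : b ≠ 0) {x : ℍ[ℚ, a, b]}
    (hx : ∀ y ∈ dualLattice (I : Set ℍ[ℚ, a, b]), qbil x y ∈ ZZ) : x ∈ I := by
  obtain ⟨w, hwd, -, he⟩ := h.exists_dual_basis ha hb
  rw [he x]
  exact sum_mem fun k _ => ZZ_smul_mem (hx _ (hwd k)) (h.basis_mem k)

/-! ### Orders -/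

theorem order_star_mem {R : Submodule ℤ ℍ[ℚ, a, b]} {e : Fin 4 → ℍ[ℚ, a, b]}
    {G : Matrix (Fin 4) (Fin 4) ℤ} (h : Lat R e G) (h1 : (1 : ℍ[ℚ, a, b]) ∈ R)
    {x : ℍ[ℚ, a, b]} (hx : x ∈ R) : star x ∈ R := by
  rw [star_eq]
  exact sub_mem (ZZ_smul_mem (h.qbil_mem hx h1) h1) hx

theorem order_level {R : Submodule ℤ ℍ[ℚ, a, b]} {e : Fin 4 → ℍ[ℚ, a, b]}
    {G : Matrix (Fin 4) (Fin 4) ℤ} (h : Lat R e G) (h1 : (1 : ℍ[ℚ, a, b]) ∈ R)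
    (hmul : ∀ x ∈ R, ∀ y ∈ R, x * y ∈ R) {N : ℤ} (hN : G.det = N ^ 2)
    {x : ℍ[ℚ, a, b]} (hx : x ∈ dualLattice (R : Set ℍ[ℚ, a, b])) : (N : ℚ) * nrd x ∈ ZZ := by
  have h2 : ∀ i j, ∃ m : ℤ, qbil (e i * x) (e j) = m := by
    intro i j
    rw [← mem_ZZ, qbil_mul_left]
    exact mem_dual.1 hx _ (hmul _ (order_star_mem h h1 (h.basis_mem i)) _ (h.basis_mem j))
  choose C hC using h2
  have h3 : (Matrix.of C).map (Int.cast : ℤ → ℚ) = cm e * RM x * EE a b * (cm e)ᵀ := by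
    rw [← cm_mul_right, ← gram_cm]
    ext i j
    simp [hC]
  have h4 := congrArg Matrix.det h3
  rw [det_map_cast, Matrix.det_mul, Matrix.det_mul, Matrix.det_mul, Matrix.det_transpose, det_EE,
    det_RM] at h4
  have h5 := h.det_eq
  rw [hN] at h5
  push_cast at h5
  apply sq_mem_ZZ
  have h6 : ((N : ℚ) * nrd x) ^ 2 = ((Matrix.of C).det : ℚ) := by
    rw [h4, mul_pow, h5]
    ring
  rw [h6]
  exact int_mem_ZZ _

theorem dual_add {x y : ℍ[ℚ, a, b]} (hx : x ∈ dualLattice (I : Set ℍ[ℚ, a, b]))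
    (hy : y ∈ dualLattice (I : Set ℍ[ℚ, a, b])) : x + y ∈ dualLattice (I : Set ℍ[ℚ, a, b]) := by
  rw [mem_dual] at *
  intro z hz
  rw [qbil_add_left]
  exact add_mem (hx z hz) (hy z hz)

theorem dual_smul {q : ℚ} (hq : q ∈ ZZ) {x : ℍ[ℚ, a, b]}
    (hx : x ∈ dualLattice (I : Set ℍ[ℚ, a, b])) : q • x ∈ dualLattice (I : Set ℍ[ℚ, a, b]) := by
  rw [mem_dual] at *
  intro z hz
  rw [qbil_smul_left]
  exact mul_mem hq (hx z hz)

/-- If `q * nrd` is integral on the dual then `q I^# ⊆ I`. -/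
theorem Lat.smul_dual_mem (h : Lat I v A) (ha : a ≠ 0) (hb : b ≠ 0) {q : ℚ}
    (hq : ∀ x ∈ dualLattice (I : Set ℍ[ℚ, a, b]), q * nrd x ∈ ZZ) {x : ℍ[ℚ, a, b]}
    (hx : x ∈ dualLattice (I : Set ℍ[ℚ, a, b])) : q • x ∈ I := by
  apply h.double_dual ha hb
  intro y hy
  have : qbil (q • x) y = q * nrd (x + y) - q * nrd x - q * nrd y := by
    rw [qbil_smul_left, nrd_add]; ring
  rw [this]
  exact sub_mem (sub_mem (hq _ (dual_add hx hy)) (hq _ hx)) (hq _ hy)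

end Lattices

/-! ### Ideals -/

section Ideals

variable {a b : ℚ}

/-- All we need to know about an ideal `I` with left order `R`. -/
structure Setup (R : Submodule ℤ ℍ[ℚ, a, b]) (e : Fin 4 → ℍ[ℚ, a, b])
    (G : Matrix (Fin 4) (Fin 4) ℤ) (I : Submodule ℤ ℍ[ℚ, a, b]) (v : Fin 4 → ℍ[ℚ, a, b])
    (A : Matrix (Fin 4) (Fin 4) ℤ) (N : ℕ) : Prop where
  ha : a ≠ 0
  hb : b ≠ 0
  hR : Lat R e G
  one : (1 : ℍ[ℚ, a, b]) ∈ R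
  mul : ∀ x ∈ R, ∀ y ∈ R, x * y ∈ R
  det : G.det = (N : ℤ) ^ 2
  hN : Squarefree N
  hI : Lat I v A
  left : leftOrderSet (I : Set ℍ[ℚ, a, b]) = (R : Set ℍ[ℚ, a, b])
  int : ∀ x ∈ I, ∃ m : ℤ, nrd x = m
  prim : (1 : ℚ) ∈ Submodule.span ℤ (nrd '' (I : Set ℍ[ℚ, a, b]))

variable {R : Submodule ℤ ℍ[ℚ, a, b]} {e : Fin 4 → ℍ[ℚ, a, b]}
    {G : Matrix (Fin 4) (Fin 4) ℤ} {I : Submodule ℤ ℍ[ℚ, a, b]} {v : Fin 4 → ℍ[ℚ, a, b]}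
    {A : Matrix (Fin 4) (Fin 4) ℤ} {N : ℕ}

theorem Setup.mem_left (S : Setup R e G I v A N) {z : ℍ[ℚ, a, b]} :
    z ∈ R ↔ ∀ y ∈ I, z * y ∈ I := by
  rw [← SetLike.mem_coe, ← S.left]
  rfl

theorem Setup.prim_ind (S : Setup R e G I v A N) (P : Submodule ℤ ℚ)
    (hP : ∀ x ∈ I, nrd x ∈ P) : (1 : ℚ) ∈ P := by
  refine (Submodule.span_le.2 ?_) S.prim
  rintro _ ⟨x, hx, rfl⟩
  exact hP x hx

theorem Setup.prim_ZZ (S : Setup R e G I v A N) {q : ℚ}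
    (hq : ∀ x ∈ I, nrd x * q ∈ ZZ) : q ∈ ZZ := by
  let P : Submodule ℤ ℚ :=
    { carrier := {t | t * q ∈ ZZ}
      add_mem' := fun {x y} hx hy => by
        change (x + y) * q ∈ ZZ
        rw [add_mul]; exact add_mem hx hy
      zero_mem' := by
        change (0 : ℚ) * q ∈ ZZ
        rw [zero_mul]; exact zero_mem _
      smul_mem' := fun c x hx => by
        change (c • x) * q ∈ ZZ
        rw [smul_mul_assoc]; exact zsmul_mem hx c }
  have : (1 : ℚ) * q ∈ ZZ := S.prim_ind P hq
  rwa [one_mul] at this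

theorem Setup.prim_smul (S : Setup R e G I v A N) (M : Submodule ℤ ℍ[ℚ, a, b]) {y : ℍ[ℚ, a, b]}
    (hq : ∀ x ∈ I, nrd x • y ∈ M) : y ∈ M := by
  let P : Submodule ℤ ℚ :=
    { carrier := {t | t • y ∈ M}
      add_mem' := fun {x z} hx hz => by
        change (x + z) • y ∈ M
        rw [add_smul]; exact add_mem hx hz
      zero_mem' := by
        change (0 : ℚ) • y ∈ M
        rw [zero_smul]; exact zero_mem _
      smul_mem' := fun c x hx => by
        change (c • x) • y ∈ M
        rw [smul_assoc]; exact M.smul_mem c hx }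
  have : (1 : ℚ) • y ∈ M := S.prim_ind P hq
  rwa [one_smul] at this

theorem Setup.exists_prime (S : Setup R e G I v A N) {p : ℕ} (hp : p.Prime) :
    ∃ x ∈ I, ∃ m : ℤ, nrd x = m ∧ ¬ (p : ℤ) ∣ m := by
  by_contra hcon
  push Not at hcon
  have hp0 : (p : ℚ) ≠ 0 := by exact_mod_cast hp.ne_zero
  have h1 : (1 / (p : ℚ)) ∈ ZZ := by
    apply S.prim_ZZ
    intro x hx
    obtain ⟨m, hm⟩ := S.int x hx
    obtain ⟨k, hk⟩ := hcon x hx m hm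
    rw [hm, hk]
    refine mem_ZZ.2 ⟨k, ?_⟩
    push_cast
    field_simp
  obtain ⟨m, hm⟩ := mem_ZZ.1 h1
  have h2 : (p : ℤ) * m = 1 := by
    have : (p : ℚ) * m = 1 := by rw [← hm]; field_simp
    exact_mod_cast this
  have h3 : (p : ℤ) ∣ 1 := ⟨m, h2.symm⟩
  exact (Nat.prime_iff_prime_int.1 hp).not_isUnit (isUnit_of_dvd_one h3)

theorem Setup.dual_mul (S : Setup R e G I v A N) {x y : ℍ[ℚ, a, b]} (hx : x ∈ I)
    (hy : y ∈ dualLattice (I : Set ℍ[ℚ, a, b])) :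
    y * star x ∈ dualLattice (R : Set ℍ[ℚ, a, b]) := by
  rw [mem_dual]
  intro r hr
  rw [qbil_mul_right, star_star]
  exact mem_dual.1 hy _ (S.mem_left.1 hr x hx)

theorem Setup.orderN (S : Setup R e G I v A N) {x : ℍ[ℚ, a, b]}
    (hx : x ∈ dualLattice (R : Set ℍ[ℚ, a, b])) : (N : ℚ) * nrd x ∈ ZZ := by
  simpa using order_level S.hR S.one S.mul S.det hx

theorem Setup.level_nrd (S : Setup R e G I v A N) {y : ℍ[ℚ, a, b]}
    (hy : y ∈ dualLattice (I : Set ℍ[ℚ, a, b])) : (N : ℚ) * nrd y ∈ ZZ := by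
  apply S.prim_ZZ
  intro x hx
  have := S.orderN (S.dual_mul hx hy)
  rw [nrd_mul, nrd_star] at this
  convert this using 1
  ring

theorem Setup.level_mem (S : Setup R e G I v A N) {y : ℍ[ℚ, a, b]}
    (hy : y ∈ dualLattice (I : Set ℍ[ℚ, a, b])) : (N : ℚ) • y ∈ I :=
  S.hI.smul_dual_mem S.ha S.hb (fun _ hx => S.level_nrd hx) hy

theorem Setup.left_dual (S : Setup R e G I v A N) {r y : ℍ[ℚ, a, b]} (hr : r ∈ R)
    (hy : y ∈ dualLattice (I : Set ℍ[ℚ, a, b])) :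
    r * y ∈ dualLattice (I : Set ℍ[ℚ, a, b]) := by
  rw [mem_dual]
  intro x hx
  rw [qbil_mul_left]
  exact mem_dual.1 hy _ (S.mem_left.1 (order_star_mem S.hR S.one hr) x hx)

theorem Setup.left_dual_conv (S : Setup R e G I v A N) {z : ℍ[ℚ, a, b]}
    (hz : ∀ y ∈ dualLattice (I : Set ℍ[ℚ, a, b]), z * y ∈ dualLattice (I : Set ℍ[ℚ, a, b])) :
    z ∈ R := by
  have h1 : star z ∈ R := by
    rw [S.mem_left]
    intro x hx
    apply S.hI.double_dual S.ha S.hb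
    intro y hy
    rw [qbil_mul_left, star_star, qbil_comm]
    exact mem_dual.1 (hz y hy) x hx
  simpa using order_star_mem S.hR S.one h1

theorem Setup.I_sub_dual (S : Setup R e G I v A N) {x : ℍ[ℚ, a, b]} (hx : x ∈ I) :
    x ∈ dualLattice (I : Set ℍ[ℚ, a, b]) :=
  mem_dual.2 fun _ hy => S.hI.qbil_mem hx hy

/-- parity of the Pfaffian -/
theorem pf_parity (B : Matrix (Fin 4) (Fin 4) ℤ) (n : Fin 4 → ℤ) (hs : ∀ i j, B i j = B j i)
    (hd : ∀ i, B i i = 2 * n i) (D : ℤ) (hD : B.det = D ^ 2) :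
    Even (B 0 1 * B 2 3 - B 0 2 * B 1 3 + B 0 3 * B 1 2 - D) := by
  rw [det4] at hD
  have h1 : Even ((B 0 1 * B 2 3 - B 0 2 * B 1 3 + B 0 3 * B 1 2) ^ 2 - D ^ 2) := by
    rw [← hD, hs 1 0, hs 2 0, hs 2 1, hs 3 0, hs 3 1, hs 3 2, hd, hd, hd, hd]
    rw [even_iff_two_dvd]
    refine ⟨2 * (B 0 1 * B 0 3 * B 1 2 * B 2 3) - (8 * n 0 * n 1 * n 2 * n 3
      - 2 * n 0 * n 1 * B 2 3 ^ 2 - 2 * n 0 * n 2 * B 1 3 ^ 2 - 2 * n 0 * n 3 * B 1 2 ^ 2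
      - 2 * n 1 * n 2 * B 0 3 ^ 2 - 2 * n 1 * n 3 * B 0 2 ^ 2 - 2 * n 2 * n 3 * B 0 1 ^ 2
      + 2 * n 0 * (B 1 2 * B 1 3 * B 2 3) + 2 * n 1 * (B 0 2 * B 0 3 * B 2 3)
      + 2 * n 2 * (B 0 1 * B 0 3 * B 1 3) + 2 * n 3 * (B 0 1 * B 0 2 * B 1 2)), ?_⟩
    ring
  rw [Int.even_sub] at h1 ⊢
  rwa [Int.even_pow' two_ne_zero, Int.even_pow' two_ne_zero] at h1

theorem Setup.four (S : Setup R e G I v A N) {x : Fin 4 → ℍ[ℚ, a, b]} (hx : ∀ i, x i ∈ I) :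
    qbil (x 0 * star (x 1) * x 2) (x 3) ∈ ZZ := by
  obtain ⟨d, hd, -⟩ := S.hI.exists_sqrt
  obtain ⟨C, -, hC⟩ := S.hI.exists_mat hx
  have hD : ((C.det * d : ℤ) : ℚ) = 4 * a * b * (cm x).det := by
    rw [hC, Matrix.det_mul, det_map_cast]
    push_cast
    rw [hd]
    ring
  choose B hB using fun i j => mem_ZZ.1 (S.hI.qbil_mem (hx i) (hx j))
  choose n hn using fun i => S.int _ (hx i)
  have hBmat : (Matrix.of B).map (Int.cast : ℤ → ℚ) = cm x * EE a b * (cm x)ᵀ := by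
    rw [← gram_cm]
    ext i j
    simp [hB]
  have hdet : (Matrix.of B).det = (C.det * d) ^ 2 := by
    have h4 := congrArg Matrix.det hBmat
    rw [det_map_cast, Matrix.det_mul, Matrix.det_mul, Matrix.det_transpose, det_EE] at h4
    have : ((Matrix.of B).det : ℚ) = (((C.det * d) ^ 2 : ℤ) : ℚ) := by
      rw [h4, Int.cast_pow, hD]
      ring
    exact_mod_cast this
  obtain ⟨k, hk⟩ := pf_parity (Matrix.of B) n
    (fun i j => by
      have : (B i j : ℚ) = B j i := by rw [← hB, ← hB, qbil_comm]
      exact_mod_cast this)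
    (fun i => by
      have : (B i i : ℚ) = 2 * n i := by rw [← hB, ← hn, qbil_self]
      exact_mod_cast this) _ hdet
  refine mem_ZZ.2 ⟨k, ?_⟩
  have h5 := four_term x
  simp only [hB] at h5
  rw [← hD] at h5
  have h6 : ((B 0 1 * B 2 3 - B 0 2 * B 1 3 + B 0 3 * B 1 2 - C.det * d : ℤ) : ℚ)
      = ((k + k : ℤ) : ℚ) := by
    rw [← hk]
    rfl
  push_cast at h5 h6
  linarith

theorem Setup.three (S : Setup R e G I v A N) {x y z : ℍ[ℚ, a, b]} (hx : x ∈ I) (hy : y ∈ I)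
    (hz : z ∈ I) : x * star y * z ∈ dualLattice (I : Set ℍ[ℚ, a, b]) := by
  rw [mem_dual]
  intro w hw
  have := S.four (x := ![x, y, z, w]) (by
    intro i
    fin_cases i <;> simpa)
  simpa using this

theorem Setup.index (S : Setup R e G I v A N) {x : ℍ[ℚ, a, b]} (hx : x ∈ I) :
    ∃ C : Matrix (Fin 4) (Fin 4) ℤ, (∀ i, e i * x = ∑ j, C i j • v j) ∧
      C.map (Int.cast : ℤ → ℚ) * cm v = cm e * RM x := by
  obtain ⟨C, hC, hC'⟩ := S.hI.exists_mat (w := fun i => e i * x)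
    (fun i => S.mem_left.1 (S.hR.basis_mem i) x hx)
  exact ⟨C, hC, by rw [← hC', cm_mul_right]⟩

theorem Setup.det_I (S : Setup R e G I v A N) : A.det = (N : ℤ) ^ 2 := by
  obtain ⟨d, hd, hd2⟩ := S.hI.exists_sqrt
  obtain ⟨δ, hδ, hδ2⟩ := S.hR.exists_sqrt
  have hδN : δ.natAbs = N := by
    have h1 : δ ^ 2 = (N : ℤ) ^ 2 := by rw [← hδ2, S.det]
    have := Int.natAbs_eq_iff_sq_eq.2 h1
    simpa using this
  -- `d ∣ m² δ`
  have hdvd : ∀ x ∈ I, ∀ m : ℤ, nrd x = m → d ∣ m ^ 2 * δ := by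
    intro x hx m hm
    obtain ⟨C, -, hC⟩ := S.index hx
    have h1 := congrArg Matrix.det hC
    rw [Matrix.det_mul, Matrix.det_mul, det_map_cast, det_RM, hm] at h1
    refine ⟨C.det, ?_⟩
    have : ((m ^ 2 * δ : ℤ) : ℚ) = ((d * C.det : ℤ) : ℚ) := by
      rw [Int.cast_mul, Int.cast_mul, Int.cast_pow, hd, hδ]
      linear_combination (-4 * a * b) * h1
    exact_mod_cast this
  have hN0 : N ≠ 0 := S.hN.ne_zero
  have hdN : ∀ p : ℕ, p.Prime → p ∣ N → (p : ℤ) ∣ d := by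
    intro p hp hpN
    obtain ⟨x, hx, m, hm, hpm⟩ := S.exists_prime hp
    have hpi := Nat.prime_iff_prime_int.1 hp
    obtain ⟨C, -, hC⟩ := S.hR.exists_mat (w := fun i => v i * ((A.det : ℚ) • star x)) (by
      intro i
      rw [S.mem_left]
      intro z hz
      rw [mul_smul_comm, smul_mul_assoc]
      exact S.hI.det_smul_dual S.ha S.hb (S.three (S.hI.basis_mem i) hx hz))
    rw [cm_mul_right] at hC
    have h1 := congrArg Matrix.det hC
    rw [Matrix.det_mul, Matrix.det_mul, det_map_cast, det_RM, nrd_smul, nrd_star, hm, hd2] at h1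
    have h2 : d * ((d ^ 2) ^ 2 * m) ^ 2 = C.det * δ := by
      have : ((d * ((d ^ 2) ^ 2 * m) ^ 2 : ℤ) : ℚ) = ((C.det * δ : ℤ) : ℚ) := by
        push_cast at h1 ⊢
        rw [hδ]
        rw [show (d : ℚ) * (((d : ℚ) ^ 2) ^ 2 * m) ^ 2
          = (4 * a * b * (cm v).det) * (((d : ℚ) ^ 2) ^ 2 * m) ^ 2 by rw [← hd]]
        linear_combination (4 * a * b) * h1
      exact_mod_cast this
    have h3 : (p : ℤ) ∣ δ := by
      rw [← Int.natAbs_dvd_natAbs, hδN]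
      simpa using hpN
    have h4 : (p : ℤ) ∣ d * ((d ^ 2) ^ 2 * m) ^ 2 := by
      rw [h2]
      exact h3.mul_left _
    rcases hpi.dvd_or_dvd h4 with h5 | h5
    · exact h5
    · rcases hpi.dvd_or_dvd (hpi.dvd_of_dvd_pow h5) with h6 | h6
      · exact hpi.dvd_of_dvd_pow (hpi.dvd_of_dvd_pow h6)
      · exact absurd h6 hpm
  -- now `|d| = N`
  have hd0 : d ≠ 0 := by
    intro h
    have := S.hI.det_ne S.ha S.hb
    rw [hd2, h] at this
    simp at this
  have hND : N ∣ d.natAbs := by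
    rw [← Nat.factorization_le_iff_dvd hN0 (by simpa using hd0)]
    intro p
    by_cases hp : p.Prime
    · by_cases hpN : p ∣ N
      · calc N.factorization p ≤ 1 := S.hN.natFactorization_le_one p
          _ ≤ _ := (hp.dvd_iff_one_le_factorization (by simpa using hd0)).1
              (Int.natCast_dvd.1 (hdN p hp hpN))
      · rw [Nat.factorization_eq_zero_of_not_dvd hpN]
        exact Nat.zero_le _
    · rw [Nat.factorization_eq_zero_of_not_prime _ hp]
      exact Nat.zero_le _
  obtain ⟨k, hk⟩ := hND
  have hk1 : k = 1 := by
    by_contra hk1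
    obtain ⟨p, hp, hpk⟩ := Nat.exists_prime_and_dvd hk1
    obtain ⟨x, hx, m, hm, hpm⟩ := S.exists_prime hp
    have h1 := Int.natAbs_dvd_natAbs.2 (hdvd x hx m hm)
    rw [Int.natAbs_mul, hδN, hk, mul_comm N k, Int.natAbs_pow] at h1
    have h2 := Nat.dvd_of_mul_dvd_mul_right (Nat.pos_of_ne_zero hN0) h1
    exact hpm (Int.natCast_dvd.2 (hp.dvd_of_dvd_pow (hpk.trans h2)))
  rw [hk1, mul_one] at hk
  rw [hd2, ← hk]
  exact (Int.natAbs_sq d).symm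

theorem Setup.local_principal (S : Setup R e G I v A N) {p : ℕ} (hp : p.Prime) :
    ∃ (m : ℤ) (C : Matrix (Fin 4) (Fin 4) ℤ), ¬ (p : ℤ) ∣ m ∧ ¬ (p : ℤ) ∣ C.det ∧
      C * A * Cᵀ = m • G := by
  obtain ⟨x, hx, m, hm, hpm⟩ := S.exists_prime hp
  obtain ⟨C, hC, hC'⟩ := S.index hx
  have hpi := Nat.prime_iff_prime_int.1 hp
  have hgram : C * A * Cᵀ = m • G := by
    have h1 : (C * A * Cᵀ).map (Int.cast : ℤ → ℚ) = (m • G).map (Int.cast : ℤ → ℚ) := by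
      have h2 : (C * A * Cᵀ).map (Int.cast : ℤ → ℚ)
          = C.map (Int.cast : ℤ → ℚ) * A.map (Int.cast : ℤ → ℚ) * (C.map (Int.cast : ℤ → ℚ))ᵀ := by
        have := Matrix.map_mul (L := C * A) (M := Cᵀ) (f := Int.castRingHom ℚ)
        have h' := Matrix.map_mul (L := C) (M := A) (f := Int.castRingHom ℚ)
        rw [h'] at this
        exact this
      rw [h2, S.hI.gram_eq]
      have h3 : C.map (Int.cast : ℤ → ℚ) * (cm v * EE a b * (cm v)ᵀ)
          * (C.map (Int.cast : ℤ → ℚ))ᵀ = (C.map (Int.cast : ℤ → ℚ) * cm v) * EE a b *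
          (C.map (Int.cast : ℤ → ℚ) * cm v)ᵀ := by
        rw [Matrix.transpose_mul]
        simp only [Matrix.mul_assoc]
      rw [h3, hC', ← cm_mul_right, ← gram_cm]
      ext i j
      simp only [Matrix.of_apply, Matrix.map_apply, Matrix.smul_apply, qbil_mul_mul, hm,
        smul_eq_mul, Int.cast_mul, S.hR.gram]
    ext i j
    have := congrFun (congrFun h1 i) j
    simp only [Matrix.map_apply] at this
    exact_mod_cast this
  refine ⟨m, C, hpm, ?_, hgram⟩
  intro hdvd
  have h4 := congrArg Matrix.det hgram
  rw [Matrix.det_mul, Matrix.det_mul, Matrix.det_transpose, S.det_I, Matrix.det_smul, S.det] at h4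
  have hN0 : (N : ℤ) ≠ 0 := by exact_mod_cast S.hN.ne_zero
  have h5 : C.det ^ 2 = m ^ 4 := by
    have : (C.det ^ 2) * (N : ℤ) ^ 2 = m ^ 4 * (N : ℤ) ^ 2 := by
      simp at h4
      linarith
    exact mul_right_cancel₀ (pow_ne_zero 2 hN0) this
  have h6 : (p : ℤ) ∣ m ^ 4 := by
    rw [← h5]
    exact hdvd.pow two_ne_zero
  exact hpm (hpi.dvd_of_dvd_pow h6)

end Ideals

/-! ### Local theory -/

section Local

variable {a b : ℚ}

theorem comb_gram1 {I : Submodule ℤ ℍ[ℚ, a, b]} {v : Fin 4 → ℍ[ℚ, a, b]}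
    {A : Matrix (Fin 4) (Fin 4) ℤ} (h : Lat I v A) {C : Matrix (Fin 4) (Fin 4) ℤ}
    {w : Fin 4 → ℍ[ℚ, a, b]} (hC : ∀ i, w i = ∑ j, C i j • v j) (i j : Fin 4) :
    qbil (w i) (v j) = ((C * A) i j : ℤ) := by
  rw [hC, qbil_sum_left, Matrix.mul_apply, Int.cast_sum]
  refine Finset.sum_congr rfl fun k _ => ?_
  rw [← Int.cast_smul_eq_zsmul ℚ, qbil_smul_left, ← h.gram, Int.cast_mul]

theorem comb_gram2 {I : Submodule ℤ ℍ[ℚ, a, b]} {v : Fin 4 → ℍ[ℚ, a, b]}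
    {A : Matrix (Fin 4) (Fin 4) ℤ} (h : Lat I v A) {C : Matrix (Fin 4) (Fin 4) ℤ}
    {w : Fin 4 → ℍ[ℚ, a, b]} (hC : ∀ i, w i = ∑ j, C i j • v j) (i j : Fin 4) :
    qbil (w i) (w j) = ((C * A * Cᵀ) i j : ℤ) := by
  conv_lhs => rw [hC j]
  rw [qbil_sum_right, Matrix.mul_apply, Int.cast_sum]
  refine Finset.sum_congr rfl fun k _ => ?_
  rw [← Int.cast_smul_eq_zsmul ℚ, qbil_smul_right, comb_gram1 h hC, Int.cast_mul,
    Matrix.transpose_apply, mul_comm]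

theorem det_rank_one (t : Fin 4 → ℤ) (M : Matrix (Fin 4) (Fin 4) ℤ) (p : ℤ) :
    p ^ 3 ∣ (Matrix.of fun i j => t i * t j + p * M i j).det := by
  refine ⟨p * M.det + ((M.updateRow 0 (t 0 • t)).det + (M.updateRow 1 (t 1 • t)).det
    + (M.updateRow 2 (t 2 • t)).det + (M.updateRow 3 (t 3 • t)).det), ?_⟩
  rw [det4, det4, det4, det4, det4, det4]
  simp [Matrix.updateRow_apply]
  ring

theorem sq_not_dvd {N p : ℕ} (hN : Squarefree N) (hp : p.Prime) : ¬ p ^ 3 ∣ N ^ 2 := by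
  intro h
  have h1 : p ∣ N := hp.dvd_of_dvd_pow ((dvd_pow_self p three_ne_zero).trans h)
  obtain ⟨k, rfl⟩ := h1
  have h2 : p ^ 2 * p ∣ p ^ 2 * k ^ 2 := by
    convert h using 1 <;> ring
  have h3 := Nat.dvd_of_mul_dvd_mul_left (pow_pos hp.pos 2) h2
  obtain ⟨l, rfl⟩ := hp.dvd_of_dvd_pow h3
  have h4 := hN p ⟨l, by ring⟩
  exact hp.one_lt.ne' (Nat.isUnit_iff.1 h4)

theorem order_disc {R : Submodule ℤ ℍ[ℚ, a, b]} {e : Fin 4 → ℍ[ℚ, a, b]}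
    {G : Matrix (Fin 4) (Fin 4) ℤ} (h : Lat R e G) (h1 : (1 : ℍ[ℚ, a, b]) ∈ R)
    (hmul : ∀ x ∈ R, ∀ y ∈ R, x * y ∈ R) {N : ℕ} (hN : G.det = (N : ℤ) ^ 2)
    (hsq : Squarefree N) (hint : ∀ x ∈ R, ∃ m : ℤ, nrd x = m) {p : ℕ} (hp : p.Prime) :
    ∃ r ∈ R, ∃ t n : ℤ, qbil r 1 = t ∧ nrd r = n ∧ ¬ (p : ℤ) ∣ t ^ 2 - 4 * n := by
  by_contra hcon
  push Not at hcon
  have hpi := Nat.prime_iff_prime_int.1 hp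
  choose T hT using fun x : R => mem_ZZ.1 (h.qbil_mem x.2 h1)
  choose n hn using fun x : R => hint x x.2
  have hdvd : ∀ x : R, (p : ℤ) ∣ T x ^ 2 - 4 * n x :=
    fun x => hcon x x.2 _ _ (hT x) (hn x)
  let e' : Fin 4 → R := fun i => ⟨e i, h.basis_mem i⟩
  have hkey : (p : ℤ) ^ 3 ∣ 16 * (N : ℤ) ^ 2 ∧ (p = 2 → (p : ℤ) ^ 3 ∣ (N : ℤ) ^ 2) := by
    constructor
    · have h2 : ∀ i j, (p : ℤ) ∣ 2 * G i j - T (e' i) * T (e' j) := by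
        intro i j
        by_cases hp2 : p = 2
        · subst hp2
          have h3 : ∀ x : R, (2 : ℤ) ∣ T x := by
            intro x
            have h4 : (2 : ℤ) ∣ T x ^ 2 - 4 * n x := hdvd x
            have h5 : (2 : ℤ) ∣ T x ^ 2 := by omega
            exact Int.prime_two.dvd_of_dvd_pow h5
          exact dvd_sub (Dvd.intro _ rfl) ((h3 _).mul_right _)
        · have hs := hdvd (e' i + e' j)
          have hi := hdvd (e' i)
          have hj := hdvd (e' j)
          have hT' : T (e' i + e' j) = T (e' i) + T (e' j) := by
            have : ((T (e' i + e' j) : ℤ) : ℚ) = ((T (e' i) + T (e' j) : ℤ) : ℚ) := by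
              push_cast
              rw [← hT, ← hT, ← hT, ← qbil_add_left]
              rfl
            exact_mod_cast this
          have hn' : n (e' i + e' j) = n (e' i) + n (e' j) + G i j := by
            have : ((n (e' i + e' j) : ℤ) : ℚ) = ((n (e' i) + n (e' j) + G i j : ℤ) : ℚ) := by
              push_cast
              rw [← hn, ← hn, ← hn, h.gram, ← nrd_add]
              rfl
            exact_mod_cast this
          have h3 : (p : ℤ) ∣ 2 * (2 * G i j - T (e' i) * T (e' j)) := by
            have := dvd_sub (dvd_add hi hj) hs
            rw [hT', hn'] at this
            obtain ⟨k, hk⟩ := this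
            exact ⟨k, by linarith⟩
          refine (hpi.dvd_or_dvd h3).resolve_left ?_
          intro h4
          have h5 : p ∣ 2 := by exact_mod_cast h4
          exact hp2 ((Nat.prime_dvd_prime_iff_eq hp Nat.prime_two).1 h5)
      choose M hM using h2
      have h3 := det_rank_one (fun i => T (e' i)) M p
      have h4 : (Matrix.of fun i j => T (e' i) * T (e' j) + p * M i j) = (2 : ℤ) • G := by
        ext i j
        simp only [Matrix.of_apply, Matrix.smul_apply, smul_eq_mul]
        linarith [hM i j]
      rw [h4, Matrix.det_smul, hN] at h3
      simpa using h3
    · intro hp2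
      subst hp2
      have h3 : ∀ x : R, (2 : ℤ) ∣ T x := by
        intro x
        have h4 : (2 : ℤ) ∣ T x ^ 2 - 4 * n x := hdvd x
        have h5 : (2 : ℤ) ∣ T x ^ 2 := by omega
        exact Int.prime_two.dvd_of_dvd_pow h5
      have h4 : ∀ i j, (2 : ℤ) ∣ G i j := by
        intro i j
        have h5 := h3 ⟨star (e j) * e i,
          hmul _ (order_star_mem h h1 (h.basis_mem j)) _ (h.basis_mem i)⟩
        have h6 : G i j = T ⟨star (e j) * e i,
          hmul _ (order_star_mem h h1 (h.basis_mem j)) _ (h.basis_mem i)⟩ := by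
          have : ((G i j : ℤ) : ℚ) = T ⟨star (e j) * e i,
              hmul _ (order_star_mem h h1 (h.basis_mem j)) _ (h.basis_mem i)⟩ := by
            rw [← hT, h.gram, qbil_mul_left, star_star, mul_one]
          exact_mod_cast this
        rw [h6]
        exact h5
      choose M hM using h4
      have h7 : G = (2 : ℤ) • Matrix.of M := by
        ext i j
        simp [hM]
      rw [← hN, h7, Matrix.det_smul]
      simp only [Fintype.card_fin]
      exact ⟨2 * (Matrix.of M).det, by push_cast; ring⟩
  apply sq_not_dvd hsq hp
  by_cases hp2 : p = 2
  · exact_mod_cast hkey.2 hp2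
  · have h2 : p ^ 3 ∣ 16 * N ^ 2 := by exact_mod_cast hkey.1
    refine Nat.Coprime.dvd_of_dvd_mul_left ?_ h2
    have : Nat.Coprime p 2 := (Nat.coprime_primes hp Nat.prime_two).2 hp2
    exact (Nat.Coprime.pow 3 4 this)

theorem toZMod_eq_iff {p : ℕ} [Fact p.Prime] (x : ℤ_[p]) :
    PadicInt.toZMod x = 0 ↔ ‖x‖ < 1 := by
  rw [← RingHom.mem_ker, PadicInt.ker_toZMod, PadicInt.norm_lt_one_iff_dvd,
    PadicInt.maximalIdeal_eq_span_p, Ideal.mem_span_singleton]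

theorem isUnit_iff_toZMod {p : ℕ} [Fact p.Prime] (x : ℤ_[p]) :
    IsUnit x ↔ PadicInt.toZMod x ≠ 0 := by
  rw [PadicInt.isUnit_iff, Ne, toZMod_eq_iff, not_lt]
  exact ⟨fun h => h.ge, fun h => le_antisymm (PadicInt.norm_le_one x) h⟩

theorem isUnit_int {p : ℕ} [Fact p.Prime] (m : ℤ) : IsUnit (m : ℤ_[p]) ↔ ¬ (p : ℤ) ∣ m := by
  rw [isUnit_iff_toZMod, map_intCast, Ne, ZMod.intCast_zmod_eq_zero_iff_dvd]

theorem zmod_two_aux : ∀ y : ZMod 2, y ≠ 0 → 1 - y = 0 := by decide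

theorem quad_two (t c : ℤ) (ht : ¬ (2 : ℤ) ∣ t ^ 2 - 4 * c) [Fact (Nat.Prime 2)] (w : ℤ_[2])
    (hw : IsUnit w) : ∃ m n : ℤ_[2], m ^ 2 + t * (m * n) + c * n ^ 2 = w := by
  have ht' : ‖(t : ℤ_[2])‖ = 1 := by
    rw [← PadicInt.isUnit_iff, isUnit_int]
    intro h
    apply ht
    have : (2 : ℤ) ∣ t := h
    exact dvd_sub (this.pow two_ne_zero) ⟨2 * c, by ring⟩
  let F : Polynomial ℤ_[2] := Polynomial.C (c : ℤ_[2]) * Polynomial.X ^ 2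
    + Polynomial.C (t : ℤ_[2]) * Polynomial.X + Polynomial.C (1 - w)
  have hF0 : F.aeval (0 : ℤ_[2]) = 1 - w := by simp [F]
  have hF1 : F.derivative.aeval (0 : ℤ_[2]) = t := by simp [F]
  have hnorm : ‖F.aeval (0 : ℤ_[2])‖ < ‖F.derivative.aeval (0 : ℤ_[2])‖ ^ 2 := by
    rw [hF0, hF1, ht', one_pow, ← toZMod_eq_iff, map_sub, map_one]
    have h2 := (isUnit_iff_toZMod w).1 hw
    exact zmod_two_aux _ h2
  obtain ⟨z, hz, -⟩ := hensels_lemma hnorm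
  refine ⟨1, z, ?_⟩
  simp [F] at hz
  linear_combination hz

theorem quad_odd {p : ℕ} [Fact p.Prime] (hp2 : p ≠ 2) (t c : ℤ)
    (ht : ¬ (p : ℤ) ∣ t ^ 2 - 4 * c) (w : ℤ_[p])
    (hw : IsUnit w) : ∃ m n : ℤ_[p], m ^ 2 + t * (m * n) + c * n ^ 2 = w := by
  have hp : p.Prime := Fact.out
  have h2 : ¬ (p : ℤ) ∣ 2 := by
    intro h
    have h5 : p ∣ 2 := by exact_mod_cast h
    exact hp2 ((Nat.prime_dvd_prime_iff_eq hp Nat.prime_two).1 h5)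
  have h2' : (2 : ZMod p) ≠ 0 := by
    have := (ZMod.intCast_zmod_eq_zero_iff_dvd 2 p).not.2 h2
    simpa using this
  have hD : ((t : ZMod p) ^ 2 - 4 * c) ≠ 0 := by
    have := (ZMod.intCast_zmod_eq_zero_iff_dvd (t ^ 2 - 4 * c) p).not.2 ht
    simpa using this
  have hcard : Fintype.card (ZMod p) % 2 = 1 := by
    rw [ZMod.card]
    exact (hp.eq_two_or_odd).resolve_left hp2
  set W : ZMod p := PadicInt.toZMod w with hW
  have hW0 : W ≠ 0 := (isUnit_iff_toZMod w).1 hw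
  obtain ⟨X, Y, hXY⟩ := FiniteField.exists_root_sum_quadratic
    (f := (Polynomial.X ^ 2 : Polynomial (ZMod p)))
    (g := Polynomial.C (-((t : ZMod p) ^ 2 - 4 * c)) * Polynomial.X ^ 2 + Polynomial.C 0
      * Polynomial.X + Polynomial.C (-4 * W))
    (Polynomial.degree_X_pow 2) (Polynomial.degree_quadratic (neg_ne_zero.2 hD)) hcard
  simp at hXY
  obtain ⟨n, hn⟩ := ZMod.ringHom_surjective (PadicInt.toZMod (p := p)) Y
  obtain ⟨m, hm⟩ := ZMod.ringHom_surjective (PadicInt.toZMod (p := p)) ((X - t * Y) / 2)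
  set u : ℤ_[p] := m ^ 2 + t * (m * n) + c * n ^ 2 with hu
  have huW : PadicInt.toZMod u = W := by
    rw [hu]
    simp only [map_add, map_mul, map_pow, map_intCast, hn, hm]
    field_simp
    linear_combination hXY
  have huu : IsUnit u := by
    rw [isUnit_iff_toZMod, huW]
    exact hW0
  obtain ⟨q, hq⟩ : ∃ q, w = u * q := huu.dvd
  have hq1 : PadicInt.toZMod q = 1 := by
    have h3 := congrArg PadicInt.toZMod hq
    rw [map_mul, huW, ← hW] at h3
    exact mul_left_cancel₀ hW0 (by rw [← h3, mul_one])
  let F : Polynomial ℤ_[p] := Polynomial.X ^ 2 - Polynomial.C q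
  have hF0 : F.aeval (1 : ℤ_[p]) = 1 - q := by simp [F]
  have hF1 : F.derivative.aeval (1 : ℤ_[p]) = ((2 : ℤ) : ℤ_[p]) := by
    simp [F]
    exact one_add_one_eq_two
  have hnorm : ‖F.aeval (1 : ℤ_[p])‖ < ‖F.derivative.aeval (1 : ℤ_[p])‖ ^ 2 := by
    rw [hF0, hF1, PadicInt.isUnit_iff.1 ((isUnit_int 2).2 h2), one_pow, ← toZMod_eq_iff, map_sub,
      map_one, hq1, sub_self]
  obtain ⟨z, hz, -⟩ := hensels_lemma hnorm
  refine ⟨m * z, n * z, ?_⟩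
  simp [F] at hz
  rw [hq, hu]
  linear_combination (m ^ 2 + t * (m * n) + c * n ^ 2) * hz

theorem quad_rep {p : ℕ} [Fact p.Prime] (t c : ℤ)
    (ht : ¬ (p : ℤ) ∣ t ^ 2 - 4 * c) (w : ℤ_[p])
    (hw : IsUnit w) : ∃ m n : ℤ_[p], m ^ 2 + t * (m * n) + c * n ^ 2 = w := by
  by_cases hp2 : p = 2
  · subst hp2
    exact quad_two t c ht w hw
  · exact quad_odd hp2 t c ht w hw

end Local

/-! ### Local equivalence and positivity -/

section Genus

variable {a b : ℚ}

theorem unit_norm {R : Submodule ℤ ℍ[ℚ, a, b]} {e : Fin 4 → ℍ[ℚ, a, b]}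
    {G : Matrix (Fin 4) (Fin 4) ℤ} (h : Lat R e G) (h1 : (1 : ℍ[ℚ, a, b]) ∈ R)
    (hmul : ∀ x ∈ R, ∀ y ∈ R, x * y ∈ R) {N : ℕ} (hN : G.det = (N : ℤ) ^ 2)
    (hsq : Squarefree N) (hint : ∀ x ∈ R, ∃ m : ℤ, nrd x = m) {p : ℕ} [hp : Fact p.Prime]
    (w : ℤ_[p]) (hw : IsUnit w) :
    ∃ U : Matrix (Fin 4) (Fin 4) ℤ_[p], IsUnit U.det ∧
      U * G.map (Int.cast : ℤ → ℤ_[p]) * Uᵀ = w • G.map (Int.cast : ℤ → ℤ_[p]) := by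
  obtain ⟨r, hr, t, n, ht, hn, hd⟩ := order_disc h h1 hmul hN hsq hint hp.out
  obtain ⟨T, hT, -⟩ := h.exists_mat (w := fun i => e i * r)
    (fun i => hmul _ (h.basis_mem i) _ hr)
  have e1 : T * G * Tᵀ = n • G := by
    ext i j
    have := comb_gram2 h hT i j
    rw [qbil_mul_mul, hn, ← h.gram] at this
    simp only [Matrix.smul_apply, smul_eq_mul]
    exact_mod_cast this.symm
  have hsym : ∀ i j, G i j = G j i := by
    intro i j
    have : (G i j : ℚ) = G j i := by rw [h.gram, h.gram, qbil_comm]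
    exact_mod_cast this
  have hGt : Gᵀ = G := by
    ext i j
    exact hsym j i
  have e2 : T * G + G * Tᵀ = t • G := by
    have hGT : G * Tᵀ = (T * G)ᵀ := by rw [Matrix.transpose_mul, hGt]
    rw [hGT]
    ext i j
    have h3 := comb_gram1 h hT i j
    have h4 := comb_gram1 h hT j i
    have h5 := qbil_trace r (e i) (e j)
    rw [ht, qbil_comm (e i) (e j * r), h3, h4, ← h.gram] at h5
    simp only [Matrix.smul_apply, smul_eq_mul, Matrix.add_apply, Matrix.transpose_apply]
    exact_mod_cast h5
  obtain ⟨m, k, hmk⟩ := quad_rep t n hd w hw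
  let f : Matrix (Fin 4) (Fin 4) ℤ →+* Matrix (Fin 4) (Fin 4) ℤ_[p] :=
    (Int.castRingHom ℤ_[p]).mapMatrix
  have hf : ∀ M : Matrix (Fin 4) (Fin 4) ℤ, f M = M.map (Int.cast : ℤ → ℤ_[p]) := fun M => rfl
  have hft : ∀ M : Matrix (Fin 4) (Fin 4) ℤ, f Mᵀ = (f M)ᵀ := fun M => rfl
  have hfs : ∀ (c : ℤ) (M : Matrix (Fin 4) (Fin 4) ℤ), f (c • M) = (c : ℤ_[p]) • f M := by
    intro c M
    ext i j
    change (((c • M) i j : ℤ) : ℤ_[p]) = (c : ℤ_[p]) • ((M i j : ℤ) : ℤ_[p])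
    rw [Matrix.smul_apply, smul_eq_mul, smul_eq_mul, Int.cast_mul]
  have e1' : f T * f G * (f T)ᵀ = (n : ℤ_[p]) • f G := by
    rw [← hft, ← map_mul, ← map_mul, e1, hfs]
  have e2' : f T * f G + f G * (f T)ᵀ = (t : ℤ_[p]) • f G := by
    rw [← hft, ← map_mul, ← map_mul, ← map_add, e2, hfs]
  rw [← hf]
  have key : (m • (1 : Matrix (Fin 4) (Fin 4) ℤ_[p]) + k • f T) * f G * (m • 1 + k • f T)ᵀ
      = w • f G := by
    have : (m • (1 : Matrix (Fin 4) (Fin 4) ℤ_[p]) + k • f T) * f G * (m • 1 + k • f T)ᵀ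
        = (m ^ 2) • f G + (m * k) • (f T * f G + f G * (f T)ᵀ)
          + (k ^ 2) • (f T * f G * (f T)ᵀ) := by
      simp only [Matrix.transpose_add, Matrix.transpose_smul, Matrix.transpose_one, add_mul,
        mul_add, Matrix.smul_mul, Matrix.mul_smul, Matrix.one_mul, Matrix.mul_one, smul_add,
        smul_smul]
      module
    rw [this, e1', e2', ← hmk]
    module
  refine ⟨_, ?_, key⟩
  have hdet := congrArg Matrix.det key
  rw [Matrix.det_mul, Matrix.det_mul, Matrix.det_transpose, Matrix.det_smul] at hdet
  have hG0 : (f G).det ≠ 0 := by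
    rw [← RingHom.map_det, hN]
    have : (N : ℤ_[p]) ≠ 0 := by exact_mod_cast hsq.ne_zero
    simpa using this
  have h6 : (m • (1 : Matrix (Fin 4) (Fin 4) ℤ_[p]) + k • f T).det
      * (m • (1 : Matrix (Fin 4) (Fin 4) ℤ_[p]) + k • f T).det = w ^ 4 := by
    apply mul_right_cancel₀ hG0
    simp only [Fintype.card_fin] at hdet
    linear_combination hdet
  exact isUnit_of_mul_isUnit_left (h6 ▸ hw.pow 4)

variable {R : Submodule ℤ ℍ[ℚ, a, b]} {e : Fin 4 → ℍ[ℚ, a, b]}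
    {G : Matrix (Fin 4) (Fin 4) ℤ} {I I' : Submodule ℤ ℍ[ℚ, a, b]} {v v' : Fin 4 → ℍ[ℚ, a, b]}
    {A A' : Matrix (Fin 4) (Fin 4) ℤ} {N : ℕ}

theorem Setup.zpEquiv (S : Setup R e G I v A N) (S' : Setup R e G I' v' A' N)
    (hint : ∀ x ∈ R, ∃ m : ℤ, nrd x = m) (p : ℕ) (hp : p.Prime) : ZpEquiv p hp A A' := by
  have : Fact p.Prime := ⟨hp⟩
  obtain ⟨m, C, hm, hC, h1⟩ := S.local_principal hp
  obtain ⟨m', C', hm', hC', h2⟩ := S'.local_principal hp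
  have um := (isUnit_int (p := p) m).2 hm
  have um' := (isUnit_int (p := p) m').2 hm'
  obtain ⟨q, hq⟩ : ∃ q, (m' : ℤ_[p]) = m * q := um.dvd
  have uq : IsUnit q := isUnit_of_mul_isUnit_right (hq ▸ um')
  obtain ⟨U, hU, h3⟩ := unit_norm S.hR S.one S.mul S.det S.hN hint q uq
  let f : Matrix (Fin 4) (Fin 4) ℤ →+* Matrix (Fin 4) (Fin 4) ℤ_[p] :=
    (Int.castRingHom ℤ_[p]).mapMatrix
  have hf : ∀ M : Matrix (Fin 4) (Fin 4) ℤ, M.map (Int.cast : ℤ → ℤ_[p]) = f M := fun M => rfl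
  have hft : ∀ M : Matrix (Fin 4) (Fin 4) ℤ, f Mᵀ = (f M)ᵀ := fun M => rfl
  have hfs : ∀ (c : ℤ) (M : Matrix (Fin 4) (Fin 4) ℤ), f (c • M) = (c : ℤ_[p]) • f M := by
    intro c M
    ext i j
    change (((c • M) i j : ℤ) : ℤ_[p]) = (c : ℤ_[p]) • ((M i j : ℤ) : ℤ_[p])
    rw [Matrix.smul_apply, smul_eq_mul, smul_eq_mul, Int.cast_mul]
  have h1' : f C * f A * (f C)ᵀ = (m : ℤ_[p]) • f G := by
    rw [← hft, ← map_mul, ← map_mul, h1, hfs]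
  have h2' : f C' * f A' * (f C')ᵀ = (m' : ℤ_[p]) • f G := by
    rw [← hft, ← map_mul, ← map_mul, h2, hfs]
  have uC : IsUnit (f C).det := by
    rw [← RingHom.map_det]
    exact (isUnit_int (p := p) _).2 hC
  have uC' : IsUnit (f C').det := by
    rw [← RingHom.map_det]
    exact (isUnit_int (p := p) _).2 hC'
  rw [hf] at h3
  have h4 : (U * f C) * f A * (U * f C)ᵀ = f C' * f A' * (f C')ᵀ := by
    calc (U * f C) * f A * (U * f C)ᵀ = U * (f C * f A * (f C)ᵀ) * Uᵀ := by
          rw [Matrix.transpose_mul]; simp only [Matrix.mul_assoc]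
      _ = (m : ℤ_[p]) • (U * f G * Uᵀ) := by
          rw [h1', Matrix.mul_smul, Matrix.smul_mul]
      _ = _ := by rw [h3, h2', hq, smul_smul]
  refine ⟨((f C')⁻¹ * (U * f C))ᵀ, ?_, ?_⟩
  · rw [Matrix.det_transpose, Matrix.det_mul, Matrix.det_mul]
    exact ((Matrix.isUnit_nonsing_inv_det _ uC')).mul (hU.mul uC)
  · rw [Matrix.transpose_transpose, hf, hf, Matrix.transpose_mul]
    calc (f C')⁻¹ * (U * f C) * f A * ((U * f C)ᵀ * ((f C')⁻¹)ᵀ)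
        = (f C')⁻¹ * ((U * f C) * f A * (U * f C)ᵀ) * ((f C')⁻¹)ᵀ := by
          simp only [Matrix.mul_assoc]
      _ = ((f C')⁻¹ * f C') * f A' * ((f C')⁻¹ * f C')ᵀ := by
          rw [h4, Matrix.transpose_mul]; simp only [Matrix.mul_assoc]
      _ = f A' := by
          rw [Matrix.nonsing_inv_mul _ uC']; simp

theorem ram_neg_a {a b : ℚ} (h : RamifiedAtInfinity a b) : a < 0 := by
  by_contra hcon
  have ha : (0 : ℝ) ≤ a := by exact_mod_cast not_lt.1 hcon
  have hs := Real.mul_self_sqrt ha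
  set s := Real.sqrt (a : ℝ)
  let x : ℍ[ℝ, (a : ℝ), (b : ℝ)] := ⟨s, 1, 0, 0⟩
  let y : ℍ[ℝ, (a : ℝ), (b : ℝ)] := ⟨s, -1, 0, 0⟩
  have hx : x ≠ 0 := fun h0 => one_ne_zero (congrArg QuaternionAlgebra.imI h0)
  have hy : y ≠ 0 := fun h0 => neg_ne_zero.2 one_ne_zero (congrArg QuaternionAlgebra.imI h0)
  have hxy : x * y = 0 := by
    ext <;> simp [x, y, hs]
  exact hy ((h x hx).mul_right_eq_zero.1 hxy)

theorem ram_neg_b {a b : ℚ} (h : RamifiedAtInfinity a b) : b < 0 := by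
  by_contra hcon
  have ha : (0 : ℝ) ≤ b := by exact_mod_cast not_lt.1 hcon
  have hs := Real.mul_self_sqrt ha
  set s := Real.sqrt (b : ℝ)
  let x : ℍ[ℝ, (a : ℝ), (b : ℝ)] := ⟨s, 0, 1, 0⟩
  let y : ℍ[ℝ, (a : ℝ), (b : ℝ)] := ⟨s, 0, -1, 0⟩
  have hx : x ≠ 0 := fun h0 => one_ne_zero (congrArg QuaternionAlgebra.imJ h0)
  have hy : y ≠ 0 := fun h0 => neg_ne_zero.2 one_ne_zero (congrArg QuaternionAlgebra.imJ h0)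
  have hxy : x * y = 0 := by
    ext <;> simp [x, y, hs]
  exact hy ((h x hx).mul_right_eq_zero.1 hxy)

theorem Lat.posDef (h : Lat I v A) (ha : a < 0) (hb : b < 0) : PosDefMat A := by
  unfold PosDefMat
  let g : ℚ →+* ℝ := Rat.castHom ℝ
  have h1 : A.map (Int.cast : ℤ → ℝ)
      = (cm v).map g * (EE a b).map g * ((cm v).map g)ᵀ := by
    rw [← Matrix.transpose_map, ← Matrix.map_mul, ← Matrix.map_mul, ← h.gram_eq]
    ext i j
    simp [g]
  have h2 : (EE a b).map g = Matrix.diagonal ![2, -2 * (a : ℝ), -2 * b, 2 * a * b] := by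
    ext i j
    fin_cases i <;> fin_cases j <;> simp [EE, g]
  have ha' : (a : ℝ) < 0 := by exact_mod_cast ha
  have hb' : (b : ℝ) < 0 := by exact_mod_cast hb
  have h3 : ((EE a b).map g).PosDef := by
    rw [h2, Matrix.posDef_diagonal_iff]
    intro i
    fin_cases i
    · simp
    · simp; linarith
    · simp; linarith
    · simp; nlinarith
  have hdet : (cm v).det ≠ 0 := cm_det_ne h.li
  have hu : IsUnit ((cm v).map g) := by
    rw [Matrix.isUnit_iff_isUnit_det]
    have : ((cm v).map g).det = g (cm v).det := (RingHom.map_det g _).symm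
    rw [this]
    exact (isUnit_iff_ne_zero.2 hdet).map g
  rw [h1]
  have := (Matrix.IsUnit.posDef_star_right_conjugate_iff hu (x := (EE a b).map g)).2 h3
  rwa [Matrix.star_eq_conjTranspose, Matrix.conjTranspose_eq_transpose_of_trivial] at this

end Genus

/-! ### The partial dual -/

section PartialDual

variable {a b : ℚ}
variable {R : Submodule ℤ ℍ[ℚ, a, b]} {e : Fin 4 → ℍ[ℚ, a, b]}
    {G : Matrix (Fin 4) (Fin 4) ℤ} {I I' : Submodule ℤ ℍ[ℚ, a, b]} {v v' : Fin 4 → ℍ[ℚ, a, b]}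
    {A A' : Matrix (Fin 4) (Fin 4) ℤ} {N : ℕ}

/-- The partial dual as a submodule. -/
def pdual (I : Submodule ℤ ℍ[ℚ, a, b]) (s : ℕ) : Submodule ℤ ℍ[ℚ, a, b] where
  carrier := {x | x ∈ dualLattice (I : Set ℍ[ℚ, a, b]) ∧ (s : ℚ) • x ∈ I}
  add_mem' := fun {x y} hx hy =>
    ⟨dual_add hx.1 hy.1, by rw [smul_add]; exact add_mem hx.2 hy.2⟩
  zero_mem' := ⟨by
    rw [mem_dual]
    intro y _
    rw [← zero_smul ℚ (0 : ℍ[ℚ, a, b]), qbil_smul_left, zero_mul]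
    exact zero_mem _, by rw [smul_zero]; exact zero_mem _⟩
  smul_mem' := fun c x hx => ⟨by
    rw [← Int.cast_smul_eq_zsmul ℚ]
    exact dual_smul (int_mem_ZZ c) hx.1, by
    rw [smul_comm]
    exact I.smul_mem c hx.2⟩

theorem mem_pdual {s : ℕ} {x : ℍ[ℚ, a, b]} :
    x ∈ pdual I s ↔ x ∈ dualLattice (I : Set ℍ[ℚ, a, b]) ∧ (s : ℚ) • x ∈ I := Iff.rfl

theorem bezout_smul {M : Submodule ℤ ℍ[ℚ, a, b]} {m n : ℕ} {x : ℍ[ℚ, a, b]}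
    (h1 : (m : ℚ) • x ∈ M) (h2 : (n : ℚ) • x ∈ M) : ((Nat.gcd m n : ℕ) : ℚ) • x ∈ M := by
  have h := Nat.gcd_eq_gcd_ab m n
  have h' : ((Nat.gcd m n : ℕ) : ℚ) = (Nat.gcdA m n : ℤ) * (m : ℚ) + (Nat.gcdB m n : ℤ) * (n : ℚ) := by
    have : (((Nat.gcd m n : ℕ) : ℤ) : ℚ) = ((m * Nat.gcdA m n + n * Nat.gcdB m n : ℤ) : ℚ) := by
      rw [h]
    push_cast at this
    rw [this]
    ring
  rw [h', add_smul, mul_smul, mul_smul]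
  exact add_mem (ZZ_smul_mem (int_mem_ZZ _) h1) (ZZ_smul_mem (int_mem_ZZ _) h2)

theorem bezout_ZZ {m n : ℕ} {x : ℚ}
    (h1 : (m : ℚ) * x ∈ ZZ) (h2 : (n : ℚ) * x ∈ ZZ) : ((Nat.gcd m n : ℕ) : ℚ) * x ∈ ZZ := by
  have h := Nat.gcd_eq_gcd_ab m n
  have h' : ((Nat.gcd m n : ℕ) : ℚ) = (Nat.gcdA m n : ℤ) * (m : ℚ) + (Nat.gcdB m n : ℤ) * (n : ℚ) := by
    have : (((Nat.gcd m n : ℕ) : ℤ) : ℚ) = ((m * Nat.gcdA m n + n * Nat.gcdB m n : ℤ) : ℚ) := by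
      rw [h]
    push_cast at this
    rw [this]
    ring
  rw [h', add_mul, mul_assoc, mul_assoc]
  exact add_mem (mul_mem (int_mem_ZZ _) h1) (mul_mem (int_mem_ZZ _) h2)

theorem gcd_pow_sqf {s t : ℕ} (h : Nat.Coprime s t) {k : ℕ} (hk : k ≠ 0) :
    Nat.gcd (s ^ k) (s * t) = s := by
  obtain ⟨l, rfl⟩ := Nat.exists_eq_succ_of_ne_zero hk
  rw [pow_succ', Nat.gcd_mul_left]
  rw [Nat.Coprime.pow_left l h, mul_one]

theorem Setup.pd_eq {s t : ℕ} (S : Setup R e G I v A (s * t)) (hst : Nat.Coprime s t) :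
    dualLattice (I : Set ℍ[ℚ, a, b]) ∩ locInv s I = (pdual I s : Set ℍ[ℚ, a, b]) := by
  ext x
  constructor
  · rintro ⟨hx, k, hk⟩
    refine ⟨hx, ?_⟩
    rcases eq_or_ne k 0 with rfl | hk0
    · rw [pow_zero, one_smul] at hk
      exact ZZ_smul_mem (nat_mem_ZZ s) hk
    · have h1 : ((s ^ k : ℕ) : ℚ) • x ∈ I := by
        rw [Nat.cast_pow]; exact hk
      have := bezout_smul h1 (S.level_mem hx)
      rwa [gcd_pow_sqf hst hk0] at this
  · rintro ⟨hx, hs⟩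
    exact ⟨hx, 1, by rwa [pow_one]⟩

theorem Setup.I_le_pd {s t : ℕ} (S : Setup R e G I v A (s * t)) {x : ℍ[ℚ, a, b]} (hx : x ∈ I) :
    x ∈ pdual I s := ⟨S.I_sub_dual hx, ZZ_smul_mem (nat_mem_ZZ s) hx⟩

theorem Setup.dual_le_pd {s t : ℕ} (S : Setup R e G I v A (s * t)) {x : ℍ[ℚ, a, b]}
    (hx : x ∈ dualLattice (I : Set ℍ[ℚ, a, b])) : (t : ℚ) • x ∈ pdual I s := by
  refine ⟨dual_smul (nat_mem_ZZ t) hx, ?_⟩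
  have := S.level_mem hx
  rwa [Nat.cast_mul, mul_smul] at this

theorem Setup.pd_nrd {s t : ℕ} (S : Setup R e G I v A (s * t)) (hst : Nat.Coprime s t)
    {x : ℍ[ℚ, a, b]} (hx : x ∈ pdual I s) : (s : ℚ) * nrd x ∈ ZZ := by
  have h1 : ((s ^ 2 : ℕ) : ℚ) * nrd x ∈ ZZ := by
    obtain ⟨m, hm⟩ := S.int _ hx.2
    rw [nrd_smul] at hm
    rw [Nat.cast_pow, hm]
    exact int_mem_ZZ m
  have := bezout_ZZ h1 (S.level_nrd hx.1)
  rwa [gcd_pow_sqf hst two_ne_zero] at this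

theorem Setup.pd_left {s t : ℕ} (S : Setup R e G I v A (s * t)) (hst : Nat.Coprime s t) :
    leftOrderSet (pdual I s : Set ℍ[ℚ, a, b]) = (R : Set ℍ[ℚ, a, b]) := by
  ext z
  constructor
  · intro hz
    have hz' : ∀ y ∈ pdual I s, z * y ∈ pdual I s := hz
    have h1 : (s : ℚ) • z ∈ R := by
      rw [S.mem_left]
      intro y hy
      rw [smul_mul_assoc]
      exact (hz' y (S.I_le_pd hy)).2
    have h2 : (t : ℚ) • z ∈ R := by
      apply S.left_dual_conv
      intro y hy
      have := (hz' _ (S.dual_le_pd hy)).1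
      rwa [mul_smul_comm, ← smul_mul_assoc] at this
    have h3 := bezout_smul h1 h2
    rw [hst, Nat.cast_one, one_smul] at h3
    exact h3
  · intro hz y hy
    refine ⟨S.left_dual hz hy.1, ?_⟩
    rw [← mul_smul_comm]
    exact S.mem_left.1 hz _ hy.2

theorem Setup.no_small {p k : ℕ} (S : Setup R e G I v A (p * k)) (hp : p.Prime)
    (h : ∀ y ∈ dualLattice (I : Set ℍ[ℚ, a, b]), (k : ℚ) * nrd y ∈ ZZ) : False := by
  obtain ⟨w, hw1, hw2, -⟩ := S.hI.exists_dual_basis S.ha S.hb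
  obtain ⟨X, hX, -⟩ := S.hI.exists_mat (w := fun i => (k : ℚ) • w i)
    (fun i => S.hI.smul_dual_mem S.ha S.hb h (hw1 i))
  have h1 : X * A = (k : ℤ) • (1 : Matrix (Fin 4) (Fin 4) ℤ) := by
    ext i j
    have h2 := comb_gram1 S.hI hX i j
    rw [qbil_smul_left, hw2] at h2
    rw [Matrix.smul_apply, Matrix.one_apply, smul_eq_mul]
    have h3 : (((k : ℤ) * (if i = j then 1 else 0) : ℤ) : ℚ) = ((X * A) i j : ℤ) := by
      rw [← h2]
      split_ifs <;> simp
    exact_mod_cast h3.symm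
  have h2 := congrArg Matrix.det h1
  rw [Matrix.det_mul, S.det_I, Matrix.det_smul, Matrix.det_one, Fintype.card_fin, mul_one] at h2
  have hk0 : (k : ℤ) ≠ 0 := by
    have := S.hN.ne_zero
    rw [Nat.mul_ne_zero_iff] at this
    exact_mod_cast this.2
  have h3 : X.det * (p : ℤ) ^ 2 = (k : ℤ) ^ 2 := by
    apply mul_right_cancel₀ (pow_ne_zero 2 hk0)
    push_cast at h2
    linear_combination h2
  have h4 : (p : ℤ) ∣ (k : ℤ) ^ 2 := ⟨X.det * p, by rw [← h3]; ring⟩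
  have h5 := (Nat.prime_iff_prime_int.1 hp).dvd_of_dvd_pow h4
  have h6 : p ∣ k := by exact_mod_cast h5
  obtain ⟨l, rfl⟩ := h6
  exact hp.one_lt.ne' (Nat.isUnit_iff.1 (S.hN p ⟨l, by ring⟩))

/-- The scaling factor of the partial dual is exactly `1 / s`. -/
theorem Setup.pd_scale {s t : ℕ} (S : Setup R e G I v A (s * t)) (hst : Nat.Coprime s t)
    (hpos : ∀ x : ℍ[ℚ, a, b], x ≠ 0 → 0 < nrd x)
    (S' : Setup R e G I' v' A' (s * t)) (u : (ℍ[ℚ, a, b])ˣ)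
    (hu : pdual I s = Submodule.map (LinearMap.mulRight ℤ (u : ℍ[ℚ, a, b])) I') :
    (s : ℚ) * nrd (u : ℍ[ℚ, a, b]) = 1 := by
  have hmem : ∀ x ∈ I', x * (u : ℍ[ℚ, a, b]) ∈ pdual I s := by
    intro x hx
    rw [hu]
    exact ⟨x, hx, rfl⟩
  have hs0 : s ≠ 0 := (Nat.mul_ne_zero_iff.1 S.hN.ne_zero).1
  have hsq : (0 : ℚ) < s := by exact_mod_cast Nat.pos_of_ne_zero hs0
  have h1 : (s : ℚ) * nrd (u : ℍ[ℚ, a, b]) ∈ ZZ := by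
    apply S'.prim_ZZ
    intro x hx
    have := S.pd_nrd hst (hmem x hx)
    rw [nrd_mul] at this
    convert this using 1
    ring
  have h2 : 0 < (s : ℚ) * nrd (u : ℍ[ℚ, a, b]) := by
    have hu0 : (u : ℍ[ℚ, a, b]) ≠ 0 := u.ne_zero
    exact mul_pos hsq (hpos _ hu0)
  obtain ⟨m, hm⟩ := mem_ZZ.1 h1
  rw [hm] at h2 ⊢
  have hm0 : 0 < m := by exact_mod_cast h2
  lift m to ℕ using hm0.le
  by_contra hcon
  have hm1 : m ≠ 1 := by
    rintro rfl
    exact hcon (by norm_num)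
  obtain ⟨p, hp, q, rfl⟩ := Nat.exists_prime_and_dvd hm1
  have hp0 : (p : ℚ) ≠ 0 := by exact_mod_cast hp.ne_zero
  -- `p` divides `s * nrd y` for all `y`
  have h3 : ∀ y ∈ pdual I s, ∃ c : ℤ, (s : ℚ) * nrd y = p * c := by
    intro y hy
    rw [hu] at hy
    obtain ⟨x, hx, rfl⟩ := hy
    obtain ⟨c, hc⟩ := S'.int x hx
    refine ⟨q * c, ?_⟩
    rw [LinearMap.mulRight_apply, nrd_mul, hc]
    push_cast at hm ⊢
    linear_combination (c : ℚ) * hm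
  have hpi := Nat.prime_iff_prime_int.1 hp
  by_cases hps : p ∣ s
  · obtain ⟨k, rfl⟩ := hps
    have hpt : ¬ p ∣ t := by
      intro hpt
      have := Nat.dvd_gcd (Dvd.intro k rfl : p ∣ p * k) hpt
      rw [hst] at this
      exact hp.one_lt.ne' (Nat.dvd_one.1 this)
    rw [mul_assoc] at S
    refine S.no_small hp ?_
    intro y hy
    obtain ⟨n, hn⟩ := mem_ZZ.1 (S.level_nrd hy)
    have hy' : (t : ℚ) • y ∈ pdual I (p * k) := by
      rw [← mul_assoc] at S
      exact S.dual_le_pd hy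
    obtain ⟨c, hc⟩ := h3 _ hy'
    rw [nrd_smul] at hc
    have h4 : (t : ℤ) * n = p * c := by
      have : (t : ℚ) * n = p * c := by
        rw [← hc, ← hn]
        push_cast
        ring
      exact_mod_cast this
    have h5 : (p : ℤ) ∣ n := by
      refine (hpi.dvd_or_dvd ⟨c, h4⟩).resolve_left ?_
      intro h6
      exact hpt (by exact_mod_cast h6)
    obtain ⟨d, rfl⟩ := h5
    refine mem_ZZ.2 ⟨d, ?_⟩
    apply mul_left_cancel₀ hp0
    push_cast at hn ⊢
    linear_combination hn
  · obtain ⟨x, hx, n, hn, hpn⟩ := S.exists_prime hp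
    obtain ⟨c, hc⟩ := h3 x (S.I_le_pd hx)
    rw [hn] at hc
    have h4 : (s : ℤ) * n = p * c := by exact_mod_cast hc
    rcases hpi.dvd_or_dvd ⟨c, h4⟩ with h5 | h5
    · exact hps (by exact_mod_cast h5)
    · exact hpn h5

theorem nrd_pos (ha : a < 0) (hb : b < 0) (x : ℍ[ℚ, a, b]) (hx : x ≠ 0) : 0 < nrd x := by
  rw [nrd_eq]
  have hab : 0 < a * b := mul_pos_of_neg_of_neg ha hb
  by_contra hcon
  apply hx
  have h1 := mul_nonneg (neg_nonneg.2 ha.le) (sq_nonneg x.imI)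
  have h2 := mul_nonneg (neg_nonneg.2 hb.le) (sq_nonneg x.imJ)
  have h3 := mul_nonneg hab.le (sq_nonneg x.imK)
  have h0 := sq_nonneg x.re
  have e0 : x.re ^ 2 = 0 := by nlinarith
  have e1 : -a * x.imI ^ 2 = 0 := by nlinarith
  have e2 : -b * x.imJ ^ 2 = 0 := by nlinarith
  have e3 : a * b * x.imK ^ 2 = 0 := by nlinarith
  ext
  · simpa using e0
  · simpa [ha.ne] using e1
  · simpa [hb.ne] using e2
  · simpa [ha.ne, hb.ne] using e3

end PartialDual

/-! ### Final assembly -/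

section Final

variable {a b : ℚ}

theorem transport {I J : Submodule ℤ ℍ[ℚ, a, b]} {v : Fin 4 → ℍ[ℚ, a, b]}
    {A : Matrix (Fin 4) (Fin 4) ℤ} {s : ℕ} (u : (ℍ[ℚ, a, b])ˣ)
    (hu : J = Submodule.map (LinearMap.mulRight ℤ (u : ℍ[ℚ, a, b])) I)
    (hs : (s : ℚ) * nrd (u : ℍ[ℚ, a, b]) = 1)
    (hv : LinearIndependent ℚ v) (hJ : Submodule.span ℤ (Set.range v) = J)
    (hA : ∀ i j, (A i j : ℚ) = s * qbil (v i) (v j)) :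
    Lat I (fun k => v k * ((u⁻¹ : (ℍ[ℚ, a, b])ˣ) : ℍ[ℚ, a, b])) A := by
  have hn : nrd ((u⁻¹ : (ℍ[ℚ, a, b])ˣ) : ℍ[ℚ, a, b]) = s := by
    have h1 : nrd (u : ℍ[ℚ, a, b]) * nrd ((u⁻¹ : (ℍ[ℚ, a, b])ˣ) : ℍ[ℚ, a, b]) = 1 := by
      rw [← nrd_mul, Units.mul_inv, nrd_one]
    linear_combination (s : ℚ) * h1 - nrd ((u⁻¹ : (ℍ[ℚ, a, b])ˣ) : ℍ[ℚ, a, b]) * hs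
  refine ⟨?_, ?_, ?_⟩
  · have hinj : LinearMap.ker
        (LinearMap.mulRight ℚ ((u⁻¹ : (ℍ[ℚ, a, b])ˣ) : ℍ[ℚ, a, b])) = ⊥ := by
      rw [LinearMap.ker_eq_bot']
      intro x hx
      exact (Units.mul_left_eq_zero _).1 hx
    exact hv.map' _ hinj
  · have h1 : Set.range (fun k => v k * ((u⁻¹ : (ℍ[ℚ, a, b])ˣ) : ℍ[ℚ, a, b]))
        = (LinearMap.mulRight ℤ ((u⁻¹ : (ℍ[ℚ, a, b])ˣ) : ℍ[ℚ, a, b])) '' Set.range v := by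
      rw [← Set.range_comp]
      rfl
    rw [h1, Submodule.span_image, hJ, hu, ← Submodule.map_comp]
    have h2 : LinearMap.mulRight ℤ ((u⁻¹ : (ℍ[ℚ, a, b])ˣ) : ℍ[ℚ, a, b])
        ∘ₗ LinearMap.mulRight ℤ (u : ℍ[ℚ, a, b]) = LinearMap.id := by
      apply LinearMap.ext
      intro x
      change x * (u : ℍ[ℚ, a, b]) * ((u⁻¹ : (ℍ[ℚ, a, b])ˣ) : ℍ[ℚ, a, b]) = x
      rw [mul_assoc, Units.mul_inv, mul_one]
    rw [h2, Submodule.map_id]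
  · intro i j
    rw [qbil_mul_mul, hn, hA]

end Final

theorem main_aux (N₁ N₂ : ℕ) (S : EichlerSetting N₁ N₂)
    (i j : Fin S.h) (s : ℕ) (hs : s ∣ N₁ * N₂)
    (A A' : Matrix (Fin 4) (Fin 4) ℤ)
    (hA : IsGramOf (S.I i j : Set ℍ[ℚ, S.a, S.b]) A)
    (hA' : IsGramOfScaled s (S.pd i j s) A') :
    InSameGenus A A' ∧
      ∃ (i' j' : Fin S.h) (A'' : Matrix (Fin 4) (Fin 4) ℤ),
        IsGramOf (S.I i' j' : Set ℍ[ℚ, S.a, S.b]) A'' ∧ ZEquiv A' A'' := by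
  have ha := ram_neg_a S.ram_inf
  have hb := ram_neg_b S.ram_inf
  obtain ⟨t, hst⟩ := hs
  have hsq := S.squarefree
  rw [hst] at hsq
  have hcop : Nat.Coprime s t := Nat.coprime_of_squarefree_mul hsq
  obtain ⟨G, hG, hGd⟩ := S.Rord_disc i
  rw [hst] at hGd
  obtain ⟨e, he⟩ := (isGramOf_iff _ _).1 hG
  have mk : ∀ {k : Fin S.h} {w : Fin 4 → ℍ[ℚ, S.a, S.b]} {B : Matrix (Fin 4) (Fin 4) ℤ},
      Lat (S.I i k) w B → Setup (S.Rord i) e G (S.I i k) w B (s * t) := by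
    intro k w B hB
    exact
      { ha := ha.ne
        hb := hb.ne
        hR := he
        one := (S.Rord_order i).2.1
        mul := (S.Rord_order i).2.2
        det := hGd
        hN := hsq
        hI := hB
        left := S.I_left i k
        int := S.I_nrd_integral i k
        prim := S.I_nrd_primitive i k }
  obtain ⟨v, hv⟩ := (isGramOf_iff _ _).1 hA
  have S1 := mk hv
  obtain ⟨v', hv', hspan, hgram⟩ := hA'
  have hpd : S.pd i j s = (pdual (S.I i j) s : Set ℍ[ℚ, S.a, S.b]) := S1.pd_eq hcop
  rw [hpd, Submodule.span_eq] at hspan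
  obtain ⟨j', u, hu⟩ := S.classes_complete i (pdual (S.I i j) s) ⟨v', hv', hspan⟩
    (S1.pd_left hcop)
  obtain ⟨w, hw, hwspan⟩ := S.I_lattice i j'
  have hB : ∃ B, Lat (S.I i j') w B := by
    have hwm : ∀ k, w k ∈ S.I i j' := fun k => hwspan ▸ Submodule.subset_span ⟨k, rfl⟩
    have : ∀ k l, ∃ m : ℤ, (m : ℚ) = qbil (w k) (w l) := by
      intro k l
      obtain ⟨m1, h1⟩ := S.I_nrd_integral i j' _ (add_mem (hwm k) (hwm l))
      obtain ⟨m2, h2⟩ := S.I_nrd_integral i j' _ (hwm k)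
      obtain ⟨m3, h3⟩ := S.I_nrd_integral i j' _ (hwm l)
      refine ⟨m1 - m2 - m3, ?_⟩
      rw [nrd_add, h2, h3] at h1
      push_cast
      linarith
    choose B hB using this
    exact ⟨B, hw, hwspan, hB⟩
  obtain ⟨B, hB⟩ := hB
  have hscale := S1.pd_scale hcop (nrd_pos ha hb) (mk hB) u hu
  have hL := transport u hu hscale hv' hspan hgram
  have hint : ∀ x ∈ S.Rord i, ∃ m : ℤ, nrd x = m := by
    rw [← S.I_diag i]
    exact S.I_nrd_integral i i
  refine ⟨⟨hv.posDef ha hb, hL.posDef ha hb, fun p hp => S1.zpEquiv (mk hL) hint p hp⟩,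
    i, j', A', (isGramOf_iff _ _).2 ⟨_, hL⟩, 1, ?_, ?_⟩
  · simp
  · simp

/-- For every `s ∣ N`, the rescaled partial dual
`I_ij^{*,s} = (I_ij^# ∩ I_ij[1/s], s·n)` lies in the same genus of quaternary quadratic
lattices as the `I_ij`, and hence is isometric to some lattice `I_{i'j'}`. -/
theorem rescaled_partial_dual_in_genus (N₁ N₂ : ℕ) (S : EichlerSetting N₁ N₂)
    (i j : Fin S.h) (s : ℕ) (hs : s ∣ N₁ * N₂)
    (A A' : Matrix (Fin 4) (Fin 4) ℤ)
    (hA : IsGramOf (S.I i j : Set ℍ[ℚ, S.a, S.b]) A)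
    (hA' : IsGramOfScaled s (S.pd i j s) A') :
    InSameGenus A A' ∧
      ∃ (i' j' : Fin S.h) (A'' : Matrix (Fin 4) (Fin 4) ℤ),
        IsGramOf (S.I i' j' : Set ℍ[ℚ, S.a, S.b]) A'' ∧ ZEquiv A' A'' := by
  exact main_aux N₁ N₂ S i j s hs A A' hA hA'

end Rep
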